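/- arXiv:2503.12397 — 2 statements merged into one kernel-verified Lean document; each statement's English description precedes it below -/
import Mathlib

section
/- There exists an absolute constant C > 0 such that for all integers n, m with 0 < m < n and every x ∈ [−1,1], ∫_{−1}^{1} |v_n^m(x,y)| w(y) dy ≤ (4/π²)·log((n+m−1)/(2m)) + C. -/
open Real MeasureTheory Finset

/-- Chebyshev nodes of the first kind: `x_k^n = cos((2k-1)π/(2n))`. -/
noncomputable def chebNode (n k : ℕ) : ℝ :=
  Real.cos ((2 * (k : ℝ) - 1) * Real.pi / (2 * (n : ℝ)))

/-- Orthonormal Chebyshev polynomials of the first kind. -/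
noncomputable def chebP (r : ℕ) (x : ℝ) : ℝ :=
  if r = 0 then Real.sqrt (1 / Real.pi)
  else Real.sqrt (2 / Real.pi) * Real.cos ((r : ℝ) * Real.arccos x)

/-- Darboux kernel `K_r(x,y) = Σ_{s=0}^r p_s(x) p_s(y)`. -/
noncomputable def darboux (r : ℕ) (x y : ℝ) : ℝ :=
  ∑ s ∈ Finset.range (r + 1), chebP s x * chebP s y

/-- de la Vallée Poussin kernel `v_n^m(x,y) = (1/(2m)) Σ_{r=n-m}^{n+m-1} K_r(x,y)`. -/
noncomputable def vpK (n m : ℕ) (x y : ℝ) : ℝ :=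
  (1 / (2 * (m : ℝ))) * ∑ r ∈ Finset.Icc (n - m) (n + m - 1), darboux r x y

/-- The Chebyshev weight `w(x) = 1/√(1-x²)`. -/
noncomputable def chebW (x : ℝ) : ℝ := 1 / Real.sqrt (1 - x ^ 2)

/-- Scaling functions `Φ_{n,k}^m(x) = (π/n) v_n^m(x_k^n, x)`. -/
noncomputable def scal (n m k : ℕ) (x : ℝ) : ℝ :=
  (Real.pi / (n : ℝ)) * vpK n m (chebNode n k) x

/-- The nodes `y_k^n`, `k = 1,…,2n`: the Chebyshev nodes of order `3n` not of order `n`. -/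
noncomputable def yNode (n k : ℕ) : ℝ := chebNode (3 * n) (3 * k / 2)

/-- Wavelet functions `ψ_{n,k}^m`. -/
noncomputable def wav (n m k : ℕ) (x : ℝ) : ℝ :=
  (Real.pi / (3 * (n : ℝ))) * vpK (3 * n) m (yNode n k) x -
    ∑ h ∈ Finset.Icc 1 n,
      scal n m h (yNode n k) * ((Real.pi / (3 * (n : ℝ))) * vpK (3 * n) m (chebNode n h) x)

/-- Filter coefficients `μ_{n,r}^m`. -/
noncomputable def muC (n m r : ℕ) : ℝ :=
  if r ≤ n - m then 1
  else if r < n + m then ((m : ℝ) + (n : ℝ) - (r : ℝ)) / (2 * (m : ℝ))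
  else 0

/-- Squared norms `ν_{n,r}^m` of the orthogonal scaling basis. -/
noncomputable def nuC (n m r : ℕ) : ℝ :=
  if r ≤ n - m then 1 else ((m : ℝ) ^ 2 + ((n : ℝ) - (r : ℝ)) ^ 2) / (2 * (m : ℝ) ^ 2)

/-- Orthogonal scaling basis `Φ_{n,r}^⊥`. -/
noncomputable def scalPerp (n m r : ℕ) (x : ℝ) : ℝ :=
  if r ≤ n - m then chebP r x
  else muC n m r * chebP r x - muC n m (2 * n - r) * chebP (2 * n - r) x

/-- The sup norm on `[-1,1]`. -/
noncomputable def supNorm (f : ℝ → ℝ) : ℝ := ⨆ x : Set.Icc (-1 : ℝ) 1, |f x|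

/-- The Lebesgue constant `c_∞ = max_{|x|≤1} ∫_{-1}^1 |v_n^m(x,y)| w(y) dy`. -/
noncomputable def cInf (n m : ℕ) : ℝ :=
  ⨆ x : Set.Icc (-1 : ℝ) 1, ∫ y in (-1 : ℝ)..1, |vpK n m x y| * chebW y

/-!
Substituting `x = cos t`, `y = cos θ` turns `v_n^m` into `(1 / π) (V(t - θ) + V(t + θ))`, where `V`
is the trigonometric de la Vallée Poussin kernel, so by evenness and periodicity of `V` the integral
is at most `(2 / π) ∫₀^π |V|`. The closed form `4 m sin²(u / 2) V(u) = sin (n u) sin (m u)` bounds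
`|V(u)|` both by `n |sinc (n u)| + O(1)` and by `O(1 / (m u²))`. Using the first bound on
`[0, 1 / m]` and the second on `[1 / m, π]`, the integral `∫₀^π |V|` is at most
`∫₀^{n/m} |sinc| + O(1)`, which is `(2 / π) log (n / m) + O(1)` since `|sin|` has mean `2 / π`.
-/

lemma inv_sin_sq_le {t : ℝ} (ht₀ : 0 < t) (ht : t ≤ π / 2) :
    (sin t ^ 2)⁻¹ ≤ 1 + (t ^ 2)⁻¹ := by
  have hcos_nonneg : 0 ≤ cos t := cos_nonneg_of_mem_Icc ⟨by linarith, ht⟩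
  have hcos : cos t ^ 2 ≤ (t ^ 2 + 1)⁻¹ := by
    calc cos t ^ 2 ≤ (1 / √(t ^ 2 + 1)) ^ 2 := by
          gcongr
          exact cos_le_one_div_sqrt_sq_add_one (by linarith) (by linarith)
      _ = (t ^ 2 + 1)⁻¹ := by rw [div_pow, sq_sqrt (by positivity), one_pow, one_div]
  have hsin : t ^ 2 / (t ^ 2 + 1) ≤ sin t ^ 2 := by
    calc t ^ 2 / (t ^ 2 + 1) = 1 - (t ^ 2 + 1)⁻¹ := by field_simp; ring
      _ ≤ 1 - cos t ^ 2 := by gcongr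
      _ = sin t ^ 2 := (sin_sq t).symm
  calc (sin t ^ 2)⁻¹ ≤ (t ^ 2 / (t ^ 2 + 1))⁻¹ := by gcongr
    _ = 1 + (t ^ 2)⁻¹ := by field_simp

lemma integral_inv_sq {a b : ℝ} (h₀ : (0 : ℝ) ∉ Set.uIcc a b) :
    ∫ u in a..b, (u ^ 2)⁻¹ = a⁻¹ - b⁻¹ := by
  calc ∫ u in a..b, (u ^ 2)⁻¹ = ∫ u in a..b, u ^ (-2 : ℤ) := by
        simp only [zpow_neg, zpow_ofNat]
    _ = a⁻¹ - b⁻¹ := by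
        rw [integral_zpow (.inr ⟨by norm_num, h₀⟩)]
        norm_num [div_neg]

lemma integral_abs_sin_period (a : ℝ) : ∫ u in a..(a + π), |sin u| = 2 := by
  have hper : Function.Periodic (fun u ↦ |sin u|) π := fun u ↦ by
    simp only [sin_add_pi, abs_neg]
  calc ∫ u in a..(a + π), |sin u| = ∫ u in 0..π, |sin u| := by
        rw [hper.intervalIntegral_add_eq a 0, zero_add]
    _ = ∫ u in 0..π, sin u := by
        refine intervalIntegral.integral_congr fun u hu ↦ ?_
        rw [Set.uIcc_of_le pi_pos.le] at hu
        exact abs_of_nonneg (sin_nonneg_of_mem_Icc hu)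
    _ = 2 := by norm_num

lemma integral_abs_sinc_period_le {a : ℝ} (ha : 0 < a) :
    ∫ u in a..(a + π), |sinc u| ≤ 2 / a := by
  calc ∫ u in a..(a + π), |sinc u| ≤ ∫ u in a..(a + π), |sin u| / a := by
        refine intervalIntegral.integral_mono_on (by linarith [pi_pos])
          (Continuous.intervalIntegrable (by fun_prop) _ _)
          (Continuous.intervalIntegrable (by fun_prop) _ _) fun u hu ↦ ?_
        have hu₀ : 0 < u := ha.trans_le hu.1
        rw [sinc_of_ne_zero hu₀.ne', abs_div, abs_of_pos hu₀]
        gcongr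
        exact hu.1
    _ = 2 / a := by rw [intervalIntegral.integral_div, integral_abs_sin_period]

lemma integral_abs_sinc_le_harmonic (N : ℕ) :
    ∫ u in 0..((N + 1) * π), |sinc u| ≤ π + 2 / π * harmonic N := by
  have hint (a b : ℝ) : IntervalIntegrable (fun u ↦ |sinc u|) volume a b :=
    Continuous.intervalIntegrable (by fun_prop) _ _
  induction N with
  | zero =>
    suffices ∫ u in 0..π, |sinc u| ≤ π by simpa
    calc ∫ u in 0..π, |sinc u| ≤ ∫ _ in 0..π, (1 : ℝ) :=
          intervalIntegral.integral_mono_on pi_pos.le (hint _ _) (by simp)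
            fun u _ ↦ abs_sinc_le_one u
      _ = π := by simp
  | succ N ih =>
    have hstep := integral_abs_sinc_period_le (a := (N + 1) * π) (by positivity)
    have hend : ((N + 1 : ℕ) + 1) * π = (N + 1) * π + π := by push_cast; ring
    have hharm : 2 / π * (harmonic (N + 1) : ℝ) = 2 / π * harmonic N + 2 / ((N + 1) * π) := by
      rw [harmonic_succ]
      push_cast
      field_simp
    rw [hend,
      ← intervalIntegral.integral_add_adjacent_intervals (hint _ ((N + 1) * π)) (hint _ _)]
    linarith

lemma integral_abs_sinc_le_log {x : ℝ} (hx : 1 ≤ x) :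
    ∫ u in 0..x, |sinc u| ≤ π + 2 / π * (1 + log x) := by
  have hx_le : x ≤ (⌊x⌋₊ + 1) * π :=
    (Nat.lt_floor_add_one x).le.trans
      (le_mul_of_one_le_right (by positivity) (by linarith [pi_gt_three]))
  have hfloor : (0 : ℝ) < ⌊x⌋₊ := by exact_mod_cast Nat.floor_pos.2 hx
  calc ∫ u in 0..x, |sinc u| ≤ ∫ u in 0..((⌊x⌋₊ + 1) * π), |sinc u| :=
        intervalIntegral.integral_mono_interval le_rfl (by linarith) hx_le
          (.of_forall fun u ↦ abs_nonneg _) (Continuous.intervalIntegrable (by fun_prop) _ _)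
    _ ≤ π + 2 / π * harmonic ⌊x⌋₊ := integral_abs_sinc_le_harmonic _
    _ ≤ π + 2 / π * (1 + log ⌊x⌋₊) := by gcongr; exact harmonic_le_one_add_log _
    _ ≤ π + 2 / π * (1 + log x) := by gcongr; exact Nat.floor_le (by linarith)

lemma integral_comp_sub_add_comp_add_of_even {E : Type*} [NormedAddCommGroup E] [NormedSpace ℝ E]
    {f : ℝ → E} {c : ℝ} (hper : Function.Periodic f (2 * c)) (heven : Function.Even f)
    (hint : ∀ a b, IntervalIntegrable f volume a b) (t : ℝ) :
    ∫ θ in 0..c, (f (t - θ) + f (t + θ)) = (2 : ℝ) • ∫ u in 0..c, f u := by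
  have hneg : ∫ u in (-c)..0, f u = ∫ u in 0..c, f u := by
    simpa [heven _] using (intervalIntegral.integral_comp_neg (a := 0) (b := c) f).symm
  have hsub : IntervalIntegrable (fun θ ↦ f (t - θ)) volume 0 c := by
    simpa using (hint t (t - c)).comp_sub_left t
  have hadd : IntervalIntegrable (fun θ ↦ f (t + θ)) volume 0 c := by
    simpa using (hint t (t + c)).comp_add_left t
  calc ∫ θ in 0..c, (f (t - θ) + f (t + θ))
      = (∫ u in (t - c)..t, f u) + ∫ u in t..(t + c), f u := by
        rw [intervalIntegral.integral_add hsub hadd, intervalIntegral.integral_comp_sub_left,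
          intervalIntegral.integral_comp_add_left, sub_zero, add_zero]
    _ = ∫ u in (t - c)..(t - c + 2 * c), f u := by
        rw [intervalIntegral.integral_add_adjacent_intervals (hint _ _) (hint _ _)]
        ring_nf
    _ = ∫ u in (-c)..c, f u := by
        rw [hper.intervalIntegral_add_eq _ (-c)]
        ring_nf
    _ = (2 : ℝ) • ∫ u in 0..c, f u := by
        rw [← intervalIntegral.integral_add_adjacent_intervals (hint _ 0) (hint _ _), hneg,
          two_smul]

/-- The trigonometric Dirichlet kernel `1/2 + ∑_{s=1}^r cos (s u)`. -/
noncomputable def dirichletKernel (r : ℕ) (u : ℝ) : ℝ :=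
  1 / 2 + ∑ s ∈ range r, cos ((s + 1) * u)

/-- The trigonometric de la Vallée Poussin kernel `(1/(2m)) ∑_{r=n-m}^{n+m-1} D_r(u)`, with
the truncated index bounds of `vpK`. -/
noncomputable def trigVPKernel (n m : ℕ) (u : ℝ) : ℝ :=
  1 / (2 * m) * ∑ r ∈ Icc (n - m) (n + m - 1), dirichletKernel r u

lemma dirichletKernel_even (r : ℕ) : Function.Even (dirichletKernel r) := fun u ↦ by
  simp only [dirichletKernel, mul_neg, cos_neg]

lemma dirichletKernel_periodic (r : ℕ) : Function.Periodic (dirichletKernel r) (2 * π) :=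
  fun u ↦ by
    unfold dirichletKernel
    congr! 2 with s
    rw [mul_add]
    exact_mod_cast cos_add_nat_mul_two_pi _ (s + 1)

lemma two_mul_sin_half_mul_dirichletKernel (r : ℕ) (u : ℝ) :
    2 * sin (u / 2) * dirichletKernel r u = sin (u * r + u / 2) := by
  have hsum : 2 * sin (u / 2) * ∑ s ∈ range r, cos ((s + 1) * u) =
      sin (u * r + u / 2) - sin (u / 2) := by
    calc 2 * sin (u / 2) * ∑ s ∈ range r, cos ((s + 1) * u)
        = 2 * (sin (u / 2) * ∑ s ∈ range r, cos (u * s + u)) := by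
          simp only [mul_assoc, add_one_mul, mul_comm u]
      _ = 2 * sin (r * u / 2) * cos ((r - 1) * u / 2 + u) := by rw [sin_mul_sum_cos, mul_assoc]
      _ = sin (u * r + u / 2) - sin (u / 2) := by rw [sin_sub_sin]; ring_nf
  rw [dirichletKernel, mul_add, hsum]
  ring

lemma two_mul_sin_half_sq_mul_sum_dirichletKernel (N : ℕ) (u : ℝ) :
    2 * sin (u / 2) ^ 2 * ∑ r ∈ range N, dirichletKernel r u = sin (N * u / 2) ^ 2 := by
  calc 2 * sin (u / 2) ^ 2 * ∑ r ∈ range N, dirichletKernel r u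
      = sin (u / 2) * ∑ r ∈ range N, sin (u * r + u / 2) := by
        simp only [← two_mul_sin_half_mul_dirichletKernel, ← mul_sum]
        ring
    _ = sin (N * u / 2) ^ 2 := by
        rw [sin_mul_sum_sin, show (N - 1) * u / 2 + u / 2 = N * u / 2 by ring, sq]

@[fun_prop]
lemma continuous_trigVPKernel (n m : ℕ) : Continuous (trigVPKernel n m) := by
  unfold trigVPKernel dirichletKernel
  fun_prop

lemma trigVPKernel_even (n m : ℕ) : Function.Even (trigVPKernel n m) := fun u ↦ by
  simp only [trigVPKernel, dirichletKernel_even _ u]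

lemma trigVPKernel_periodic (n m : ℕ) : Function.Periodic (trigVPKernel n m) (2 * π) :=
  fun u ↦ by simp only [trigVPKernel, dirichletKernel_periodic _ u]

lemma intervalIntegrable_abs_trigVPKernel (n m : ℕ) (a b : ℝ) :
    IntervalIntegrable (fun u ↦ |trigVPKernel n m u|) volume a b :=
  (continuous_trigVPKernel n m).abs.intervalIntegrable a b

lemma four_mul_sin_half_sq_mul_trigVPKernel {n m : ℕ} (hm : 0 < m) (hmn : m ≤ n) (u : ℝ) :
    4 * m * sin (u / 2) ^ 2 * trigVPKernel n m u = sin (n * u) * sin (m * u) := by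
  have hIcc : Icc (n - m) (n + m - 1) = Ico (n - m) (n + m) :=
    Icc_sub_one_right_eq_Ico_of_not_isMin (not_isMin_of_lt (by omega : 0 < n + m)) _
  calc 4 * m * sin (u / 2) ^ 2 * trigVPKernel n m u
      = 2 * sin (u / 2) ^ 2 * ∑ r ∈ Ico (n - m) (n + m), dirichletKernel r u := by
        rw [trigVPKernel, hIcc]
        field_simp
        ring
    _ = sin ((n + m : ℕ) * u / 2) ^ 2 - sin ((n - m : ℕ) * u / 2) ^ 2 := by
        rw [sum_Ico_eq_sub _ (by omega), mul_sub, two_mul_sin_half_sq_mul_sum_dirichletKernel,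
          two_mul_sin_half_sq_mul_sum_dirichletKernel]
    _ = (1 - cos (n * u + m * u)) / 2 - (1 - cos (n * u - m * u)) / 2 := by
        rw [sin_sq_eq_half_sub, sin_sq_eq_half_sub, Nat.cast_sub hmn]
        push_cast
        ring_nf
    _ = sin (n * u) * sin (m * u) := by rw [cos_add, cos_sub]; ring

section Bounds

variable {n m : ℕ} {u : ℝ}

lemma abs_trigVPKernel_le (hm : 0 < m) (hmn : m ≤ n) (hu₀ : 0 < u) (hu : u ≤ π) :
    |trigVPKernel n m u| ≤ |sin (n * u)| * (|sin (m * u)| / m) * (1 / 4 + (u ^ 2)⁻¹) := by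
  have hsin : 0 < sin (u / 2) := sin_pos_of_pos_of_lt_pi (by linarith) (by linarith)
  have hclosed : trigVPKernel n m u =
      sin (n * u) * (sin (m * u) / m) * ((sin (u / 2) ^ 2)⁻¹ / 4) := by
    rw [mul_div_assoc' (sin (n * u)), ← four_mul_sin_half_sq_mul_trigVPKernel hm hmn]
    field_simp
  have hinv : (sin (u / 2) ^ 2)⁻¹ / 4 ≤ 1 / 4 + (u ^ 2)⁻¹ := by
    calc (sin (u / 2) ^ 2)⁻¹ / 4 ≤ (1 + ((u / 2) ^ 2)⁻¹) / 4 := by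
          gcongr
          exact inv_sin_sq_le (by linarith) (by linarith)
      _ = 1 / 4 + (u ^ 2)⁻¹ := by field_simp; ring
  calc |trigVPKernel n m u|
      = |sin (n * u)| * (|sin (m * u)| / m) * ((sin (u / 2) ^ 2)⁻¹ / 4) := by
        rw [hclosed, abs_mul, abs_mul, abs_div, Nat.abs_cast,
          abs_of_nonneg (by positivity : 0 ≤ (sin (u / 2) ^ 2)⁻¹ / 4)]
    _ ≤ |sin (n * u)| * (|sin (m * u)| / m) * (1 / 4 + (u ^ 2)⁻¹) := by gcongr

lemma abs_trigVPKernel_le_sinc (hm : 0 < m) (hmn : m ≤ n) (hu₀ : 0 < u) (hu : u ≤ π) :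
    |trigVPKernel n m u| ≤ n * |sinc (n * u)| + 1 := by
  have hm₀ : (0 : ℝ) < m := by exact_mod_cast hm
  have hn₀ : (0 : ℝ) < n := by exact_mod_cast hm.trans_le hmn
  have hsin_m : |sin (m * u)| / m ≤ u := by
    rw [div_le_iff₀' hm₀]
    exact abs_sin_le_abs.trans_eq (abs_of_pos (mul_pos hm₀ hu₀))
  have hsinc : |sin (n * u)| / u = n * |sinc (n * u)| := by
    rw [sinc_of_ne_zero (by positivity), abs_div, abs_of_pos (mul_pos hn₀ hu₀)]
    field_simp
  calc |trigVPKernel n m u|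
      ≤ |sin (n * u)| * (|sin (m * u)| / m) * (1 / 4 + (u ^ 2)⁻¹) :=
        abs_trigVPKernel_le hm hmn hu₀ hu
    _ ≤ |sin (n * u)| * u * (1 / 4 + (u ^ 2)⁻¹) := by gcongr
    _ = |sin (n * u)| / u + |sin (n * u)| * (u / 4) := by field_simp; ring
    _ ≤ |sin (n * u)| / u + 1 * 1 := by
        gcongr
        · exact abs_sin_le_one _
        · linarith [pi_lt_four]
    _ = n * |sinc (n * u)| + 1 := by rw [hsinc, mul_one]

lemma abs_trigVPKernel_le_inv_sq (hm : 0 < m) (hmn : m ≤ n) (hu₀ : 0 < u) (hu : u ≤ π) :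
    |trigVPKernel n m u| ≤ (m : ℝ)⁻¹ * (1 / 4 + (u ^ 2)⁻¹) := by
  refine (abs_trigVPKernel_le hm hmn hu₀ hu).trans ?_
  gcongr
  calc |sin (n * u)| * (|sin (m * u)| / m) ≤ 1 * (1 / m) := by
        gcongr <;> exact abs_sin_le_one _
    _ = (m : ℝ)⁻¹ := by rw [one_mul, one_div]

lemma integral_abs_trigVPKernel_near_le (hm : 0 < m) (hmn : m ≤ n) :
    ∫ u in 0..(m : ℝ)⁻¹, |trigVPKernel n m u| ≤ π + 2 / π * (1 + log (n / m)) + 1 := by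
  have hm₁ : (1 : ℝ) ≤ m := by exact_mod_cast hm
  have hmn' : (1 : ℝ) ≤ n / m := by
    rw [one_le_div (by positivity)]
    exact_mod_cast hmn
  have hinv : (m : ℝ)⁻¹ ≤ 1 := inv_le_one_of_one_le₀ hm₁
  calc ∫ u in 0..(m : ℝ)⁻¹, |trigVPKernel n m u|
      ≤ ∫ u in 0..(m : ℝ)⁻¹, (n * |sinc (n * u)| + 1) :=
        intervalIntegral.integral_mono_on_of_le_Ioo (by positivity)
          (intervalIntegrable_abs_trigVPKernel n m _ _)
          (Continuous.intervalIntegrable (by fun_prop) _ _)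
          fun u hu ↦ abs_trigVPKernel_le_sinc hm hmn hu.1 (by linarith [hu.2, pi_gt_three])
    _ = (∫ v in 0..(n / m : ℝ), |sinc v|) + (m : ℝ)⁻¹ := by
        rw [intervalIntegral.integral_add (Continuous.intervalIntegrable (by fun_prop) _ _)
          (by simp), intervalIntegral.integral_const_mul,
          intervalIntegral.mul_integral_comp_mul_left (f := fun v ↦ |sinc v|)]
        simp [div_eq_mul_inv]
    _ ≤ π + 2 / π * (1 + log (n / m)) + 1 := by
        gcongr
        exact integral_abs_sinc_le_log hmn'

lemma integral_abs_trigVPKernel_far_le (hm : 0 < m) (hmn : m ≤ n) :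
    ∫ u in (m : ℝ)⁻¹..π, |trigVPKernel n m u| ≤ π / 4 + 1 := by
  have hm₁ : (1 : ℝ) ≤ m := by exact_mod_cast hm
  have hinv₀ : 0 < (m : ℝ)⁻¹ := by positivity
  have hinv : (m : ℝ)⁻¹ ≤ 1 := inv_le_one_of_one_le₀ hm₁
  have hle : (m : ℝ)⁻¹ ≤ π := by linarith [pi_gt_three]
  have h₀ : (0 : ℝ) ∉ Set.uIcc (m : ℝ)⁻¹ π := by
    rw [Set.uIcc_of_le hle]
    exact fun h ↦ hinv₀.not_ge h.1
  have hint : IntervalIntegrable (fun u : ℝ ↦ (u ^ 2)⁻¹) volume (m : ℝ)⁻¹ π :=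
    ContinuousOn.intervalIntegrable <| ContinuousOn.inv₀ (by fun_prop) fun _ hu ↦
      pow_ne_zero 2 (ne_of_mem_of_not_mem hu h₀)
  calc ∫ u in (m : ℝ)⁻¹..π, |trigVPKernel n m u|
      ≤ ∫ u in (m : ℝ)⁻¹..π, (m : ℝ)⁻¹ * (1 / 4 + (u ^ 2)⁻¹) :=
        intervalIntegral.integral_mono_on hle (intervalIntegrable_abs_trigVPKernel n m _ _)
          ((intervalIntegrable_const.add hint).const_mul _)
          fun u hu ↦ abs_trigVPKernel_le_inv_sq hm hmn (hinv₀.trans_le hu.1) hu.2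
    _ = (m : ℝ)⁻¹ * ((π - (m : ℝ)⁻¹) / 4 + (m - π⁻¹)) := by
        rw [intervalIntegral.integral_const_mul,
          intervalIntegral.integral_add intervalIntegrable_const hint,
          integral_inv_sq h₀, intervalIntegral.integral_const, inv_inv, smul_eq_mul,
          mul_one_div]
    _ ≤ (m : ℝ)⁻¹ * (π / 4 + m) := by
        gcongr
        · linarith
        · linarith [inv_pos.2 pi_pos]
    _ = (m : ℝ)⁻¹ * (π / 4) + 1 := by field_simp
    _ ≤ π / 4 + 1 := by
        gcongr
        exact mul_le_of_le_one_left (by positivity) hinv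

lemma integral_abs_trigVPKernel_le (hm : 0 < m) (hmn : m ≤ n) :
    ∫ u in 0..π, |trigVPKernel n m u| ≤ 2 / π * log (n / m) + 7 := by
  have hnear := integral_abs_trigVPKernel_near_le hm hmn
  have hfar := integral_abs_trigVPKernel_far_le hm hmn
  have htwo_div_pi : 2 / π ≤ 1 := (div_le_one pi_pos).2 two_le_pi
  rw [← intervalIntegral.integral_add_adjacent_intervals
    (intervalIntegrable_abs_trigVPKernel n m 0 (m : ℝ)⁻¹)
    (intervalIntegrable_abs_trigVPKernel n m _ _)]
  linarith [pi_lt_d2]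

end Bounds

lemma chebP_succ_cos_mul_chebP_succ_cos (s : ℕ) {t θ : ℝ} (ht : t ∈ Set.Icc 0 π)
    (hθ : θ ∈ Set.Icc 0 π) :
    chebP (s + 1) (cos t) * chebP (s + 1) (cos θ) =
      1 / π * (cos ((s + 1) * (t - θ)) + cos ((s + 1) * (t + θ))) := by
  have hnorm : √(2 / π) * √(2 / π) = 2 / π := mul_self_sqrt (by positivity)
  simp only [chebP, Nat.add_one_ne_zero, if_false, arccos_cos ht.1 ht.2, arccos_cos hθ.1 hθ.2,
    mul_sub, mul_add _ t θ, cos_sub, cos_add, Nat.cast_succ]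
  linear_combination cos ((s + 1) * t) * cos ((s + 1) * θ) * hnorm

lemma darboux_cos_cos (r : ℕ) {t θ : ℝ} (ht : t ∈ Set.Icc 0 π) (hθ : θ ∈ Set.Icc 0 π) :
    darboux r (cos t) (cos θ) =
      1 / π * (dirichletKernel r (t - θ) + dirichletKernel r (t + θ)) := by
  have hzero : chebP 0 (cos t) * chebP 0 (cos θ) = 1 / π := by
    simp only [chebP, if_true]
    exact mul_self_sqrt (by positivity)
  simp only [darboux, sum_range_succ', hzero, chebP_succ_cos_mul_chebP_succ_cos _ ht hθ,
    ← mul_sum, sum_add_distrib, dirichletKernel]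
  ring

lemma vpK_cos_cos (n m : ℕ) {t θ : ℝ} (ht : t ∈ Set.Icc 0 π) (hθ : θ ∈ Set.Icc 0 π) :
    vpK n m (cos t) (cos θ) =
      1 / π * (trigVPKernel n m (t - θ) + trigVPKernel n m (t + θ)) := by
  simp only [vpK, trigVPKernel, darboux_cos_cos _ ht hθ, ← mul_sum, sum_add_distrib]
  ring

lemma integral_mul_chebW (f : ℝ → ℝ) :
    ∫ y in (-1)..1, f y * chebW y = ∫ θ in 0..π, f (cos θ) := by
  rw [← Polynomial.Chebyshev.integral_measureT_eq_integral_cos,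
    Polynomial.Chebyshev.integral_measureT]
  simp only [chebW, one_div, sqrt_inv]

lemma integral_abs_vpK_cos_mul_chebW_le (n m : ℕ) {t : ℝ} (ht : t ∈ Set.Icc 0 π) :
    ∫ y in (-1)..1, |vpK n m (cos t) y| * chebW y ≤
      2 / π * ∫ u in 0..π, |trigVPKernel n m u| := by
  calc ∫ y in (-1)..1, |vpK n m (cos t) y| * chebW y
      = ∫ θ in 0..π, |vpK n m (cos t) (cos θ)| := integral_mul_chebW _
    _ = ∫ θ in 0..π, 1 / π * |trigVPKernel n m (t - θ) + trigVPKernel n m (t + θ)| := by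
        refine intervalIntegral.integral_congr fun θ hθ ↦ ?_
        rw [Set.uIcc_of_le pi_pos.le] at hθ
        simp only [vpK_cos_cos n m ht hθ, abs_mul, abs_of_pos (one_div_pos.2 pi_pos)]
    _ ≤ ∫ θ in 0..π, 1 / π * (|trigVPKernel n m (t - θ)| + |trigVPKernel n m (t + θ)|) := by
        refine intervalIntegral.integral_mono_on pi_pos.le
          (Continuous.intervalIntegrable (by fun_prop) _ _)
          (Continuous.intervalIntegrable (by fun_prop) _ _) fun θ _ ↦ ?_
        gcongr
        exact abs_add_le _ _
    _ = 1 / π * (2 * ∫ u in 0..π, |trigVPKernel n m u|) := by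
        rw [intervalIntegral.integral_const_mul,
          integral_comp_sub_add_comp_add_of_even (f := fun u ↦ |trigVPKernel n m u|)
            (fun u ↦ by simp only [trigVPKernel_periodic n m u])
            (fun u ↦ by simp only [trigVPKernel_even n m u])
            (intervalIntegrable_abs_trigVPKernel n m), smul_eq_mul]
    _ = 2 / π * ∫ u in 0..π, |trigVPKernel n m u| := by ring

lemma log_div_le_log_two_add_log {a b : ℝ} (hb : 1 ≤ b) (ha : 0 < a) :
    log (a / b) ≤ log 2 + log ((a + b - 1) / (2 * b)) := by
  have hnum : 0 < a + b - 1 := by linarith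
  rw [← log_mul two_ne_zero (by positivity)]
  gcongr
  calc a / b ≤ (a + b - 1) / b := by gcongr; linarith
    _ = 2 * ((a + b - 1) / (2 * b)) := by field_simp

theorem vp_kernel_L1_bound :
    ∃ C : ℝ, 0 < C ∧ ∀ n m : ℕ, 0 < m → m < n →
      ∀ x ∈ Set.Icc (-1 : ℝ) 1,
        (∫ y in (-1 : ℝ)..1, |vpK n m x y| * chebW y) ≤
          (4 / Real.pi ^ 2) * Real.log (((n : ℝ) + (m : ℝ) - 1) / (2 * (m : ℝ))) + C := by
  refine ⟨4 / π ^ 2 * log 2 + 14 / π, by have := log_pos one_lt_two; positivity, ?_⟩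
  intro n m hm hmn x hx
  have hm₁ : (1 : ℝ) ≤ m := by exact_mod_cast hm
  have hn₀ : (0 : ℝ) < n := by exact_mod_cast hm.trans hmn
  calc ∫ y in (-1 : ℝ)..1, |vpK n m x y| * chebW y
      = ∫ y in (-1)..1, |vpK n m (cos (arccos x)) y| * chebW y := by rw [cos_arccos hx.1 hx.2]
    _ ≤ 2 / π * ∫ u in 0..π, |trigVPKernel n m u| :=
        integral_abs_vpK_cos_mul_chebW_le n m ⟨arccos_nonneg x, arccos_le_pi x⟩
    _ ≤ 2 / π * (2 / π * log (n / m) + 7) := by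
        gcongr
        exact integral_abs_trigVPKernel_le hm hmn.le
    _ ≤ 2 / π * (2 / π * (log 2 + log ((n + m - 1) / (2 * m))) + 7) := by
        gcongr
        exact log_div_le_log_two_add_log hm₁ hn₀
    _ = 4 / π ^ 2 * log ((n + m - 1) / (2 * m)) + (4 / π ^ 2 * log 2 + 14 / π) := by ring
end

section
/- For all integers n, m with 0 < m < n, every 1 ≤ p < ∞ with conjugate exponent p' (1/p + 1/p' = 1), and every vector a = (a_1,…,a_n) ∈ ℝ^n, the scaling basis satisfies the L^p Riesz bounds: (1/(1+4π))·‖a‖_{ℓ^p} ≤ ‖Σ_{k=1}^{n} a_k Φ_{n,k}^m‖_p ≤ c_{p'}·(1+4π)·‖a‖_{ℓ^p}, where ‖a‖_{ℓ^p} = ((π/n) Σ_{k=1}^{n} |a_k|^p)^{1/p}, ‖f‖_p = (∫_{−1}^{1} |f(x)|^p w(x) dx)^{1/p}, and c_{p'} = sup{‖σ_n^m f‖_{p'} : ‖f‖_{p'} = 1} is the L^{p'} operator norm of the VP operator σ_n^m (with ‖·‖_∞ the sup norm on [−1,1] when p' = ∞). -/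
open Real MeasureTheory Finset

/-- The de la Vallée Poussin operator `σ_n^m`. -/
noncomputable def vpOp (n m : ℕ) (f : ℝ → ℝ) (x : ℝ) : ℝ :=
  ∫ y in (-1 : ℝ)..1, vpK n m x y * f y * chebW y

/-- The weighted `L^q` norm on `[-1,1]`. -/
noncomputable def lpNorm (q : ℝ) (f : ℝ → ℝ) : ℝ :=
  (∫ x in (-1 : ℝ)..1, |f x| ^ q * chebW x) ^ (1 / q)

/-- The `L^q` operator norm (Lebesgue constant) of the VP operator, `1 ≤ q < ∞`. -/
noncomputable def vpOpNormLp (n m : ℕ) (q : ℝ) : ℝ :=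
  sSup {a : ℝ | ∃ f : ℝ → ℝ, Continuous f ∧ lpNorm q f = 1 ∧ a = lpNorm q (vpOp n m f)}

/-- The uniform-norm operator norm (Lebesgue constant) of the VP operator. -/
noncomputable def vpOpNormSup (n m : ℕ) : ℝ :=
  sSup {a : ℝ | ∃ f : ℝ → ℝ, Continuous f ∧ supNorm f = 1 ∧ a = supNorm (vpOp n m f)}

/-!
The whole argument rests on a Marcinkiewicz inequality at the nodes, with constant independent of
`n` and `p`, for polynomials `f` of degree less than `2n`. Such an `f` is reproduced by the kernel
`v_{3n}^n`, a multiple of the difference of two Fejér-type sums `K_0 + ⋯ + K_{M-1}`. These are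
nonnegative, so `|v_{3n}^n|` is dominated by their sum, whose integral and node sums have explicit
bounds, and Schur's test concludes.

The scaling functions interpolate at the nodes, `Φ_{n,k}^m(x_h) = δ_{kh}`, so this inequality
applied to `∑ a_k Φ_{n,k}^m` is the lower bound. For the upper bound, pair with `g`: since
`∫ Φ_{n,k}^m g w = (π/n) σ_n^m g(x_k)`, Hölder's inequality at the nodes and the Marcinkiewicz
inequality for `σ_n^m g` control the pairing by the operator norm of `σ_n^m`, and duality of the
weighted `L^p` norms does the rest.
-/

namespace VallePoussin

open Polynomial.Chebyshev (measureT integrable_measureT integral_measureT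
  integral_measureT_eq_integral_cos sumZeroes integral_eq_sumZeroes sumZeroes_T_of_not_dvd T)

section Abstract

variable {α : Type*} [MeasurableSpace α] {μ : Measure α} {p : ℝ}

lemma integral_mul_rpow_le {f w : α → ℝ} (hp : 1 ≤ p) (hf : ∀ x, 0 ≤ f x) (hw : ∀ x, 0 ≤ w x)
    (hwi : Integrable w μ) (hfw : Integrable (fun x ↦ f x * w x) μ)
    (hfpw : Integrable (fun x ↦ f x ^ p * w x) μ) :
    (∫ x, f x * w x ∂μ) ^ p ≤ (∫ x, w x ∂μ) ^ (p - 1) * ∫ x, f x ^ p * w x ∂μ := by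
  set I := ∫ x, f x * w x ∂μ
  set S := ∫ x, w x ∂μ
  have hI : 0 ≤ I := integral_nonneg fun x ↦ mul_nonneg (hf x) (hw x)
  have hS0 : 0 ≤ S := integral_nonneg hw
  have hJ : 0 ≤ ∫ x, f x ^ p * w x ∂μ :=
    integral_nonneg fun x ↦ mul_nonneg (rpow_nonneg (hf x) p) (hw x)
  rcases hI.eq_or_lt with hI0 | hIpos
  · rw [← hI0, zero_rpow (by linarith)]
    positivity
  have hSpos : 0 < S := by
    refine hS0.lt_of_ne' fun hS_zero ↦ hIpos.ne' ?_
    have hw0 : w =ᵐ[μ] 0 := (integral_eq_zero_iff_of_nonneg hw hwi).1 hS_zero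
    refine integral_eq_zero_of_ae ?_
    filter_upwards [hw0] with x hx
    simp [hx]
  have hcpos : 0 < I / S := by positivity
  -- The integrated inequality is the tangent line of `t ↦ t ^ p` at the mean `I / S`.
  have bernoulli (x : α) :
      (I / S) ^ p * (1 - p) * w x + (I / S) ^ p * p / (I / S) * (f x * w x) ≤ f x ^ p * w x := by
    have h := one_add_mul_self_le_rpow_one_add (s := f x / (I / S) - 1)
      (by linarith [div_nonneg (hf x) hcpos.le]) hp
    rw [add_sub_cancel, div_rpow (hf x) hcpos.le, le_div_iff₀ (rpow_pos_of_pos hcpos p)] at h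
    refine le_trans (le_of_eq ?_) (mul_le_mul_of_nonneg_right h (hw x))
    field_simp
    ring
  have hle := integral_mono ((hwi.const_mul _).add (hfw.const_mul _)) hfpw bernoulli
  rw [integral_add' (hwi.const_mul _) (hfw.const_mul _), integral_const_mul,
    integral_const_mul] at hle
  calc I ^ p = S ^ (p - 1) * ((I / S) ^ p * (1 - p) * S + (I / S) ^ p * p / (I / S) * I) := by
        rw [div_rpow hI hS0, rpow_sub_one hSpos.ne']
        have := (rpow_pos_of_pos hSpos p).ne'
        field_simp
        ring
    _ ≤ _ := by gcongr

lemma sum_abs_rpow_le_of_abs_le_integral {ι : Type*} {s : Finset ι} {u : ι → ℝ} {f : α → ℝ}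
    {w : ι → α → ℝ} {A B : ℝ} (hp : 1 ≤ p) (hA : 0 ≤ A) (hw : ∀ i x, 0 ≤ w i x)
    (hwi : ∀ i, Integrable (w i) μ) (hfw : ∀ i, Integrable (fun x ↦ |f x| * w i x) μ)
    (hfpw : ∀ i, Integrable (fun x ↦ |f x| ^ p * w i x) μ)
    (hfp : Integrable (fun x ↦ |f x| ^ p) μ)
    (hu : ∀ i ∈ s, |u i| ≤ ∫ x, |f x| * w i x ∂μ) (hwA : ∀ i, ∫ x, w i x ∂μ ≤ A)
    (hwB : ∀ x, ∑ i ∈ s, w i x ≤ B) :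
    ∑ i ∈ s, |u i| ^ p ≤ A ^ (p - 1) * B * ∫ x, |f x| ^ p ∂μ := by
  have hfpw_nonneg (i : ι) : 0 ≤ ∫ x, |f x| ^ p * w i x ∂μ :=
    integral_nonneg fun x ↦ mul_nonneg (by positivity) (hw i x)
  have row_bound : ∀ i ∈ s, |u i| ^ p ≤ A ^ (p - 1) * ∫ x, |f x| ^ p * w i x ∂μ := fun i hi ↦
    calc |u i| ^ p ≤ (∫ x, |f x| * w i x ∂μ) ^ p := by gcongr; exact hu i hi
      _ ≤ (∫ x, w i x ∂μ) ^ (p - 1) * ∫ x, |f x| ^ p * w i x ∂μ :=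
        integral_mul_rpow_le hp (fun x ↦ abs_nonneg _) (hw i) (hwi i) (hfw i) (hfpw i)
      _ ≤ A ^ (p - 1) * ∫ x, |f x| ^ p * w i x ∂μ := by
        gcongr
        · exact hfpw_nonneg i
        · exact integral_nonneg (hw i)
        · exact hwA i
  have column_bound : ∑ i ∈ s, ∫ x, |f x| ^ p * w i x ∂μ ≤ B * ∫ x, |f x| ^ p ∂μ := by
    rw [← integral_finsetSum _ fun i _ ↦ hfpw i, ← integral_const_mul]
    refine integral_mono (integrable_finsetSum _ fun i _ ↦ hfpw i) (hfp.const_mul B) fun x ↦ ?_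
    simp only [← mul_sum, mul_comm B]
    exact mul_le_mul_of_nonneg_left (hwB x) (by positivity)
  calc ∑ i ∈ s, |u i| ^ p ≤ A ^ (p - 1) * ∑ i ∈ s, ∫ x, |f x| ^ p * w i x ∂μ := by
        rw [mul_sum]; exact sum_le_sum row_bound
    _ ≤ A ^ (p - 1) * B * ∫ x, |f x| ^ p ∂μ := by rw [mul_assoc]; gcongr

end Abstract

lemma le_sSup_mul {E : Type*} [SMul ℝ E] {P : E → Prop} {N : E → ℝ} {T : E → E}
    (hP : ∀ (c : ℝ) f, P f → P (c • f)) (hN : ∀ (c : ℝ) f, N (c • f) = |c| * N f)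
    (hN_nonneg : ∀ f, 0 ≤ N f) (hT : ∀ (c : ℝ) f, T (c • f) = c • T f)
    (hbdd : ∃ K, ∀ f, P f → N (T f) ≤ K * N f) {g : E} (hg : P g) :
    N (T g) ≤ sSup {a | ∃ f, P f ∧ N f = 1 ∧ a = N (T f)} * N g := by
  obtain ⟨K, hK⟩ := hbdd
  rcases (hN_nonneg g).eq_or_lt with hg0 | hgpos
  · simpa [← hg0] using hK g hg
  have hle : N (T ((N g)⁻¹ • g)) ≤ sSup {a | ∃ f, P f ∧ N f = 1 ∧ a = N (T f)} := by
    refine le_csSup ⟨K, ?_⟩ ⟨_, hP _ g hg, ?_, rfl⟩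
    · rintro _ ⟨f, hf, hf1, rfl⟩
      simpa [hf1] using hK f hf
    · rw [hN, abs_of_pos (inv_pos.2 hgpos), inv_mul_cancel₀ hgpos.ne']
  rwa [hT, hN, abs_of_pos (inv_pos.2 hgpos), inv_mul_le_iff₀' hgpos] at hle

section ChebyshevSystem

/-- The normalisation of the orthonormal Chebyshev polynomials: `p_r = chebConst r • T_r`. -/
noncomputable def chebConst (r : ℕ) : ℝ := if r = 0 then √(1 / π) else √(2 / π)

lemma chebConst_zero_mul_self : chebConst 0 * chebConst 0 = 1 / π := by
  simp only [chebConst, if_true]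
  exact mul_self_sqrt (by positivity)

lemma chebConst_mul_self {r : ℕ} (hr : r ≠ 0) : chebConst r * chebConst r = 2 / π := by
  simp only [chebConst, hr, if_false]
  exact mul_self_sqrt (by positivity)

lemma chebP_cos (r : ℕ) (θ : ℝ) : chebP r (cos θ) = chebConst r * cos (r * θ) := by
  have hcos : cos (r * arccos (cos θ)) = cos (r * θ) := by
    have hT := Polynomial.Chebyshev.T_real_cos (arccos (cos θ)) r
    rw [cos_arccos (neg_one_le_cos θ) (cos_le_one θ), Polynomial.Chebyshev.T_real_cos] at hT
    exact_mod_cast hT.symm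
  unfold chebP chebConst
  rw [hcos]
  split_ifs with hr
  · simp [hr]
  · rfl

lemma chebP_cos_arccos (r : ℕ) (x : ℝ) : chebP r (cos (arccos x)) = chebP r x := by
  simp only [chebP, arccos_cos (arccos_nonneg x) (arccos_le_pi x)]

@[fun_prop]
lemma continuous_chebP (r : ℕ) : Continuous (chebP r) := by
  unfold chebP
  have := continuous_arccos
  split_ifs <;> fun_prop

lemma abs_chebP_le (r : ℕ) (x : ℝ) : |chebP r x| ≤ √(2 / π) := by
  have hconst_nonneg : 0 ≤ chebConst r := by
    unfold chebConst
    split_ifs <;> positivity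
  have hconst_le : chebConst r ≤ √(2 / π) := by
    unfold chebConst
    split_ifs
    · gcongr
      norm_num
    · rfl
  rw [← chebP_cos_arccos, chebP_cos, abs_mul, abs_of_nonneg hconst_nonneg]
  exact (mul_le_of_le_one_right hconst_nonneg (abs_cos_le_one _)).trans hconst_le

lemma chebP_eq_eval_T (r : ℕ) {x : ℝ} (hx : x ∈ Set.Icc (-1 : ℝ) 1) :
    chebP r x = chebConst r * (T ℝ r).eval x := by
  rw [← cos_arccos hx.1 hx.2, chebP_cos, Polynomial.Chebyshev.T_real_cos, Int.cast_natCast]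

lemma integral_measureT_congr {f g : ℝ → ℝ} (h : Set.EqOn f g (Set.Icc (-1) 1)) :
    ∫ x, f x ∂measureT = ∫ x, g x ∂measureT := by
  rw [integral_measureT_eq_integral_cos, integral_measureT_eq_integral_cos]
  exact intervalIntegral.integral_congr fun θ _ ↦ h (cos_mem_Icc θ)

lemma integral_chebP_mul_chebP (s t : ℕ) :
    ∫ x, chebP s x * chebP t x ∂measureT = if s = t then 1 else 0 := by
  have hpoly : ∫ x, chebP s x * chebP t x ∂measureT =
      chebConst s * chebConst t * ∫ x, (T ℝ s).eval x * (T ℝ t).eval x ∂measureT := by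
    rw [← integral_const_mul]
    refine integral_measureT_congr fun x hx ↦ ?_
    simp only [chebP_eq_eval_T _ hx]
    ring
  rw [hpoly]
  split_ifs with hst
  · subst hst
    rcases eq_or_ne s 0 with rfl | hs
    · rw [chebConst_zero_mul_self, Nat.cast_zero,
        Polynomial.Chebyshev.integral_eval_T_real_mul_self_measureT_zero]
      field_simp
    · rw [chebConst_mul_self hs,
        Polynomial.Chebyshev.integral_T_real_mul_self_measureT_of_ne_zero hs]
      field_simp
  · rw [Polynomial.Chebyshev.integral_eval_T_real_mul_eval_T_real_measureT_of_ne hst, mul_zero]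

lemma chebNode_mem_Icc (n k : ℕ) : chebNode n k ∈ Set.Icc (-1 : ℝ) 1 := cos_mem_Icc _

lemma sum_eval_chebNode (n : ℕ) (P : Polynomial ℝ) :
    π / n * ∑ k ∈ Icc 1 n, P.eval (chebNode n k) = sumZeroes n P := by
  rw [sumZeroes, ← Ico_add_one_right_eq_Icc, sum_Ico_eq_sum_range, Nat.add_sub_cancel]
  refine congrArg _ (sum_congr rfl fun i _ ↦ ?_)
  rw [chebNode]
  congr 2
  push_cast
  ring

lemma sum_chebP_mul_chebP_chebNode {n s t : ℕ} (hs : s < n) (ht : t < n) :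
    π / n * ∑ k ∈ Icc 1 n, chebP s (chebNode n k) * chebP t (chebNode n k) =
      if s = t then 1 else 0 := by
  have hdeg : (T ℝ s * T ℝ t).degree < 2 * n := by
    rw [Polynomial.degree_mul, Polynomial.Chebyshev.degree_T, Polynomial.Chebyshev.degree_T]
    norm_cast
    omega
  calc π / n * ∑ k ∈ Icc 1 n, chebP s (chebNode n k) * chebP t (chebNode n k)
      = chebConst s * chebConst t *
          (π / n * ∑ k ∈ Icc 1 n, (T ℝ s * T ℝ t).eval (chebNode n k)) := by
        rw [mul_left_comm (chebConst s * chebConst t), mul_sum (a := chebConst s * chebConst t)]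
        refine congrArg _ (sum_congr rfl fun k _ ↦ ?_)
        rw [chebP_eq_eval_T s (chebNode_mem_Icc n k), chebP_eq_eval_T t (chebNode_mem_Icc n k),
          Polynomial.eval_mul]
        ring
    _ = ∫ x, chebP s x * chebP t x ∂measureT := by
        rw [sum_eval_chebNode, ← integral_eq_sumZeroes (by omega) hdeg, ← integral_const_mul]
        refine integral_measureT_congr fun x hx ↦ ?_
        simp only [chebP_eq_eval_T _ hx, Polynomial.eval_mul]
        ring
    _ = if s = t then 1 else 0 := integral_chebP_mul_chebP s t

lemma sum_chebP_chebNode {n s : ℕ} (hs : ¬ 2 * n ∣ s) :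
    ∑ k ∈ Icc 1 n, chebP s (chebNode n k) = 0 := by
  rcases eq_or_ne n 0 with rfl | hn
  · simp
  have hsum : π / n * ∑ k ∈ Icc 1 n, (T ℝ s).eval (chebNode n k) = 0 := by
    rw [sum_eval_chebNode]
    exact sumZeroes_T_of_not_dvd (by exact_mod_cast hs)
  simp only [chebP_eq_eval_T s (chebNode_mem_Icc n _), ← mul_sum]
  rw [(mul_eq_zero.1 hsum).resolve_left (by positivity), mul_zero]

lemma chebP_chebNode_add {n k j : ℕ} (hj : j < n) :
    chebP (n + j) (chebNode n k) = -chebP (n - j) (chebNode n k) := by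
  have hzero : cos (n * ((2 * k - 1) * π / (2 * n))) = 0 := by
    have hn : n ≠ 0 := by omega
    rw [cos_eq_zero_iff]
    refine ⟨(k : ℤ) - 1, ?_⟩
    push_cast
    field_simp
    ring
  have hconst : chebConst (n + j) = chebConst (n - j) := by
    rw [chebConst, chebConst, if_neg (by omega), if_neg (by omega)]
  rw [chebNode, chebP_cos, chebP_cos, hconst, Nat.cast_add, Nat.cast_sub hj.le, add_mul (n : ℝ),
    sub_mul (n : ℝ), cos_add, cos_sub, hzero]
  ring

end ChebyshevSystem

section Kernels

lemma darboux_succ (r : ℕ) (x y : ℝ) :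
    darboux (r + 1) x y = darboux r x y + chebP (r + 1) x * chebP (r + 1) y :=
  sum_range_succ _ _

lemma vpK_eq_sum_Ico (n m : ℕ) (x y : ℝ) :
    vpK n m x y = 1 / (2 * m) * ∑ r ∈ Ico (n - m) (n + m), darboux r x y := by
  rcases Nat.eq_zero_or_pos m with rfl | hm
  · simp [vpK]
  · rw [vpK, ← Ico_add_one_right_eq_Icc, Nat.sub_add_cancel (by omega)]

@[fun_prop]
lemma continuous_darboux (r : ℕ) (x : ℝ) : Continuous (darboux r x) := by
  unfold darboux
  fun_prop

@[fun_prop]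
lemma continuous_vpK (n m : ℕ) (x : ℝ) : Continuous (vpK n m x) := by
  unfold vpK
  fun_prop

lemma integrable_of_continuous {f : ℝ → ℝ} (hf : Continuous f) : Integrable f measureT :=
  integrable_measureT hf.continuousOn

lemma integral_darboux_mul (r : ℕ) (x : ℝ) {g : ℝ → ℝ} (hg : Continuous g) :
    ∫ y, darboux r x y * g y ∂measureT =
      ∑ s ∈ range (r + 1), (∫ y, chebP s y * g y ∂measureT) * chebP s x := by
  simp only [darboux, sum_mul]
  rw [integral_finsetSum _ fun s _ ↦ integrable_of_continuous (by fun_prop)]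
  refine sum_congr rfl fun s _ ↦ ?_
  simp only [mul_assoc, integral_const_mul]
  ring

lemma integral_vpK_mul (n m : ℕ) (x : ℝ) {g : ℝ → ℝ} (hg : Continuous g) :
    ∫ y, vpK n m x y * g y ∂measureT =
      1 / (2 * m) * ∑ r ∈ Ico (n - m) (n + m),
        ∑ s ∈ range (r + 1), (∫ y, chebP s y * g y ∂measureT) * chebP s x := by
  simp only [vpK_eq_sum_Ico, mul_assoc, integral_const_mul, sum_mul]
  rw [integral_finsetSum _ fun r _ ↦ integrable_of_continuous (by fun_prop)]
  simp only [integral_darboux_mul _ _ hg]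

lemma integral_darboux_mul_chebP {r s : ℕ} (hs : s ≤ r) (x : ℝ) :
    ∫ y, darboux r x y * chebP s y ∂measureT = chebP s x := by
  rw [integral_darboux_mul r x (continuous_chebP s)]
  simp only [integral_chebP_mul_chebP, ite_mul, one_mul, zero_mul, sum_ite_eq', mem_range]
  rw [if_pos (by omega)]

lemma integral_vpK_mul_chebP {n m s : ℕ} (hm : 0 < m) (hmn : m ≤ n) (hs : s ≤ n - m) (x : ℝ) :
    ∫ y, vpK n m x y * chebP s y ∂measureT = chebP s x := by
  simp only [vpK_eq_sum_Ico, mul_assoc, integral_const_mul, sum_mul]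
  rw [integral_finsetSum _ fun r _ ↦ integrable_of_continuous (by fun_prop),
    sum_congr rfl fun r hr ↦ integral_darboux_mul_chebP (hs.trans (mem_Ico.1 hr).1) x, sum_const,
    Nat.card_Ico, show n + m - (n - m) = 2 * m by omega, nsmul_eq_mul]
  push_cast
  field_simp

lemma integral_darboux (r : ℕ) (x : ℝ) : ∫ y, darboux r x y ∂measureT = 1 := by
  have h := integral_darboux_mul_chebP (Nat.zero_le r) x
  simp only [chebP, if_true, integral_mul_const] at h
  exact mul_right_cancel₀ (by positivity) (h.trans (one_mul _).symm)

lemma chebP_zero_mul_self (x y : ℝ) : chebP 0 x * chebP 0 y = 1 / π := by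
  simp only [chebP, if_true]
  exact mul_self_sqrt (by positivity)

-- The matrix `√(π/n) p_s(x_k)`, `s < n`, has orthonormal columns, hence orthonormal rows.
lemma darboux_chebNode {n k h : ℕ} (hk : k ∈ Icc 1 n) (hh : h ∈ Icc 1 n) :
    darboux (n - 1) (chebNode n k) (chebNode n h) = if k = h then n / π else 0 := by
  have hn : 0 < n := by grind
  let P : Matrix (Icc 1 n) (range n) ℝ := .of fun k s ↦ chebP s (chebNode n k)
  have left_inverse : ((π / n) • P.transpose) * P = 1 := by
    ext s t
    rw [Matrix.smul_mul]
    simp only [P, Matrix.smul_apply, Matrix.mul_apply, Matrix.transpose_apply, Matrix.of_apply,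
      Matrix.one_apply, smul_eq_mul, Subtype.ext_iff]
    rw [sum_coe_sort (Icc 1 n) fun k ↦ chebP s (chebNode n k) * chebP t (chebNode n k)]
    exact sum_chebP_mul_chebP_chebNode (mem_range.1 s.2) (mem_range.1 t.2)
  have right_inverse : P * ((π / n) • P.transpose) = 1 :=
    (Matrix.mul_eq_one_comm_of_card_eq _ _ _ (by simp)).1 left_inverse
  have hentry := congrFun₂ right_inverse ⟨k, hk⟩ ⟨h, hh⟩
  rw [Matrix.mul_smul] at hentry
  simp only [P, Matrix.smul_apply, Matrix.mul_apply, Matrix.transpose_apply, Matrix.of_apply,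
    Matrix.one_apply, smul_eq_mul, Subtype.mk.injEq] at hentry
  rw [sum_coe_sort (range n) fun s ↦ chebP s (chebNode n k) * chebP s (chebNode n h)] at hentry
  calc darboux (n - 1) (chebNode n k) (chebNode n h)
      = n / π * (π / n * ∑ s ∈ range n, chebP s (chebNode n k) * chebP s (chebNode n h)) := by
        rw [darboux, Nat.sub_add_cancel hn]
        field_simp
    _ = if k = h then n / π else 0 := by rw [hentry, mul_ite, mul_one, mul_zero]

lemma darboux_chebNode_add_darboux_chebNode {n i : ℕ} (hi : i < n) (k h : ℕ) :
    darboux (n - 1 - i) (chebNode n k) (chebNode n h) +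
      darboux (n + i) (chebNode n k) (chebNode n h) =
    2 * darboux (n - 1) (chebNode n k) (chebNode n h) := by
  induction i with
  | zero =>
    obtain ⟨r, rfl⟩ : ∃ r, n = r + 1 := ⟨n - 1, by omega⟩
    have hzero := chebP_chebNode_add (k := k) hi
    simp only [add_zero, tsub_zero, self_eq_neg] at hzero
    simp only [add_zero, tsub_zero, darboux_succ, hzero]
    simp only [Nat.add_sub_cancel]
    ring
  | succ i ih =>
    have ih := ih (by omega)
    rw [show n - 1 - i = n - 1 - (i + 1) + 1 by omega, darboux_succ,
      show n - 1 - (i + 1) + 1 = n - (i + 1) by omega] at ih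
    rw [← add_assoc, darboux_succ, add_assoc n i 1, chebP_chebNode_add hi,
      chebP_chebNode_add hi]
    linarith

lemma sum_Ico_sub_add {M : Type*} [AddCommMonoid M] (f : ℕ → M) {n m : ℕ} (hmn : m ≤ n) :
    ∑ r ∈ Ico (n - m) (n + m), f r = ∑ i ∈ range m, (f (n - 1 - i) + f (n + i)) := by
  rw [← sum_Ico_consecutive f (Nat.sub_le n m) (Nat.le_add_right n m), sum_add_distrib,
    sum_Ico_eq_sum_range f n, Nat.add_sub_cancel_left, sum_Ico_eq_sum_range f (n - m),
    Nat.sub_sub_self hmn, ← sum_range_reflect]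
  refine congrArg₂ _ (sum_congr rfl fun i hi ↦ congrArg f ?_) rfl
  grind

lemma vpK_chebNode {n m k h : ℕ} (hm : 0 < m) (hmn : m ≤ n) (hk : k ∈ Icc 1 n)
    (hh : h ∈ Icc 1 n) :
    vpK n m (chebNode n k) (chebNode n h) = if k = h then n / π else 0 := by
  rw [vpK_eq_sum_Ico, sum_Ico_sub_add _ hmn, sum_congr rfl fun i hi ↦
    darboux_chebNode_add_darboux_chebNode ((mem_range.1 hi).trans_le hmn) k h, sum_const,
    card_range, nsmul_eq_mul, darboux_chebNode hk hh]
  field_simp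

end Kernels

section FejerKernel

/-- The Dirichlet kernel `1/2 + cos t + ⋯ + cos (r t)`. -/
noncomputable def dirichletKernel (r : ℕ) (t : ℝ) : ℝ := 1 / 2 + ∑ s ∈ range r, cos ((s + 1) * t)

lemma sum_dirichletKernel (M : ℕ) (t : ℝ) :
    ∑ r ∈ range M, dirichletKernel r t =
      ((∑ j ∈ range M, cos (j * t)) ^ 2 + (∑ j ∈ range M, sin (j * t)) ^ 2) / 2 := by
  induction M with
  | zero => simp
  | succ M ih =>
    have hM : ∑ s ∈ range M, cos ((s + 1) * t) =
        ∑ j ∈ range M, (cos (M * t) * cos (j * t) + sin (M * t) * sin (j * t)) := by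
      rw [← sum_range_reflect]
      refine sum_congr rfl fun j hj ↦ ?_
      rw [← cos_sub, ← sub_mul, show M - 1 - j = M - (j + 1) by omega,
        Nat.cast_sub (mem_range.1 hj)]
      push_cast
      ring_nf
    rw [sum_range_succ, ih, sum_range_succ, sum_range_succ, dirichletKernel, hM, sum_add_distrib,
      ← mul_sum, ← mul_sum]
    linear_combination -(1 / 2) * sin_sq_add_cos_sq (M * t)

lemma pi_mul_darboux_cos (r : ℕ) (α β : ℝ) :
    π * darboux r (cos α) (cos β) =
      dirichletKernel r (α - β) + dirichletKernel r (α + β) := by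
  have hterm (s : ℕ) : π * (chebP (s + 1) (cos α) * chebP (s + 1) (cos β)) =
      cos ((s + 1) * (α - β)) + cos ((s + 1) * (α + β)) := by
    calc π * (chebP (s + 1) (cos α) * chebP (s + 1) (cos β))
        = π * (chebConst (s + 1) * chebConst (s + 1)) *
            (cos ((s + 1) * α) * cos ((s + 1) * β)) := by
          rw [chebP_cos, chebP_cos]
          push_cast
          ring
      _ = cos ((s + 1) * (α - β)) + cos ((s + 1) * (α + β)) := by
          rw [chebConst_mul_self s.succ_ne_zero, mul_sub, mul_add, cos_sub, cos_add]
          field_simp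
          ring
  rw [darboux, sum_range_succ', mul_add, mul_sum, sum_congr rfl fun s _ ↦ hterm s,
    sum_add_distrib, chebP_zero_mul_self, mul_one_div_cancel pi_ne_zero, dirichletKernel,
    dirichletKernel]
  ring

/-- The Fejér-type sum `K_0 + ⋯ + K_{M-1}` of Darboux kernels. -/
noncomputable def fejerSum (M : ℕ) (x y : ℝ) : ℝ := ∑ r ∈ range M, darboux r x y

lemma fejerSum_nonneg (M : ℕ) (x y : ℝ) : 0 ≤ fejerSum M x y := by
  have hcos : π * fejerSum M x y =
      ∑ r ∈ range M, dirichletKernel r (arccos x - arccos y) +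
        ∑ r ∈ range M, dirichletKernel r (arccos x + arccos y) := by
    rw [fejerSum, mul_sum, ← sum_add_distrib]
    refine sum_congr rfl fun r _ ↦ ?_
    simp only [← pi_mul_darboux_cos, darboux, chebP_cos_arccos]
  rw [← mul_nonneg_iff_of_pos_left pi_pos, hcos, sum_dirichletKernel, sum_dirichletKernel]
  positivity

@[fun_prop]
lemma continuous_fejerSum (M : ℕ) (x : ℝ) : Continuous (fejerSum M x) := by
  unfold fejerSum
  fun_prop

lemma integral_fejerSum (M : ℕ) (x : ℝ) : ∫ y, fejerSum M x y ∂measureT = M := by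
  simp only [fejerSum]
  rw [integral_finsetSum _ fun r _ ↦ integrable_of_continuous (by fun_prop)]
  simp only [integral_darboux, sum_const, card_range, nsmul_eq_mul, mul_one]

lemma vpK_eq_fejerSum_sub {n m : ℕ} (hmn : m ≤ n) (x y : ℝ) :
    vpK n m x y = 1 / (2 * m) * (fejerSum (n + m) x y - fejerSum (n - m) x y) := by
  rw [vpK_eq_sum_Ico, sum_Ico_eq_sub _ (by omega), fejerSum, fejerSum]

/-- A nonnegative majorant of `|v_n^m|`, obtained by replacing the difference of the two
Fejér-type sums making up `v_n^m` by their sum. -/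
noncomputable def vpMajorant (n m : ℕ) (x y : ℝ) : ℝ :=
  1 / (2 * m) * (fejerSum (n + m) x y + fejerSum (n - m) x y)

lemma vpMajorant_nonneg (n m : ℕ) (x y : ℝ) : 0 ≤ vpMajorant n m x y :=
  mul_nonneg (by positivity) (add_nonneg (fejerSum_nonneg _ _ _) (fejerSum_nonneg _ _ _))

lemma abs_vpK_le_vpMajorant {n m : ℕ} (hmn : m ≤ n) (x y : ℝ) :
    |vpK n m x y| ≤ vpMajorant n m x y := by
  rw [vpK_eq_fejerSum_sub hmn, vpMajorant, abs_mul, abs_of_nonneg (by positivity)]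
  have h₁ := fejerSum_nonneg (n + m) x y
  have h₂ := fejerSum_nonneg (n - m) x y
  gcongr
  exact abs_le.2 ⟨by linarith, by linarith⟩

@[fun_prop]
lemma continuous_vpMajorant (n m : ℕ) (x : ℝ) : Continuous (vpMajorant n m x) := by
  unfold vpMajorant
  fun_prop

lemma integral_vpMajorant {n m : ℕ} (hm : 0 < m) (hmn : m ≤ n) (x : ℝ) :
    ∫ y, vpMajorant n m x y ∂measureT = n / m := by
  simp only [vpMajorant]
  rw [integral_const_mul, integral_add (integrable_of_continuous (by fun_prop))
    (integrable_of_continuous (by fun_prop)), integral_fejerSum, integral_fejerSum,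
    Nat.cast_add, Nat.cast_sub hmn]
  field_simp
  ring

lemma sum_chebP_chebNode_mul_eq_zero {n s : ℕ} (hs : ¬ 2 * n ∣ s) (y : ℝ) :
    ∑ k ∈ Icc 1 n, chebP s (chebNode n k) * chebP s y = 0 := by
  rw [← sum_mul, sum_chebP_chebNode hs, zero_mul]

lemma sum_darboux_chebNode {n r : ℕ} (hr : r < 2 * n) (y : ℝ) :
    ∑ k ∈ Icc 1 n, darboux r (chebNode n k) y = n / π := by
  simp only [darboux]
  rw [sum_comm, sum_eq_single_of_mem 0 (by simp)]
  · simp only [chebP_zero_mul_self, sum_const, Nat.card_Icc, Nat.add_sub_cancel, nsmul_eq_mul]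
    ring
  · exact fun s hs hs0 ↦ sum_chebP_chebNode_mul_eq_zero
      (Nat.not_dvd_of_pos_of_lt (by omega) (by grind)) y

-- The node sums of `p_s` alias at multiples of `2n`, so only `p_0` and `p_{2n}` contribute.
lemma sum_darboux_chebNode_le {n r : ℕ} (hr : r < 4 * n) (y : ℝ) :
    ∑ k ∈ Icc 1 n, darboux r (chebNode n k) y ≤ 3 * n / π := by
  rcases lt_or_ge r (2 * n) with hr' | hr'
  · rw [sum_darboux_chebNode hr']
    gcongr
    linarith [n.cast_nonneg (α := ℝ)]
  have hterm (k : ℕ) : chebP (2 * n) (chebNode n k) * chebP (2 * n) y ≤ 2 / π :=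
    calc chebP (2 * n) (chebNode n k) * chebP (2 * n) y
        ≤ |chebP (2 * n) (chebNode n k)| * |chebP (2 * n) y| := by
          rw [← abs_mul]
          exact le_abs_self _
      _ ≤ √(2 / π) * √(2 / π) := by gcongr <;> exact abs_chebP_le _ _
      _ = 2 / π := mul_self_sqrt (by positivity)
  simp only [darboux]
  rw [sum_comm, sum_eq_add_of_mem 0 (2 * n) (by simp) (by grind) (by omega)]
  · have h0 : ∑ k ∈ Icc 1 n, chebP 0 (chebNode n k) * chebP 0 y = n / π := by
      simp [chebP_zero_mul_self, div_eq_mul_inv]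
    have h2n := sum_le_card_nsmul (Icc 1 n) _ _ fun k _ ↦ hterm k
    rw [Nat.card_Icc, Nat.add_sub_cancel, nsmul_eq_mul] at h2n
    rw [h0]
    linear_combination h2n
  · intro s hs hs0
    refine sum_chebP_chebNode_mul_eq_zero ?_ y
    rintro ⟨c, rfl⟩
    have hc : 2 * n * c < 2 * n * 2 := by grind
    have := lt_of_mul_lt_mul_left' hc
    interval_cases c <;> simp at hs0

lemma sum_vpMajorant_chebNode_le {n : ℕ} (hn : n ≠ 0) (y : ℝ) :
    ∑ k ∈ Icc 1 n, vpMajorant (3 * n) n (chebNode n k) y ≤ 5 * n / π := by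
  have hlow : ∑ r ∈ range (2 * n), ∑ k ∈ Icc 1 n, darboux r (chebNode n k) y =
      2 * n * (n / π) := by
    rw [sum_congr rfl fun r hr ↦ sum_darboux_chebNode (mem_range.1 hr) y, sum_const, card_range,
      nsmul_eq_mul, Nat.cast_mul, Nat.cast_ofNat]
  have hhigh : ∑ i ∈ range (2 * n), ∑ k ∈ Icc 1 n, darboux (2 * n + i) (chebNode n k) y ≤
      2 * n * (3 * n / π) := by
    refine (sum_le_card_nsmul _ _ _ fun i hi ↦ sum_darboux_chebNode_le (by grind) y).trans_eq ?_
    rw [card_range, nsmul_eq_mul, Nat.cast_mul, Nat.cast_ofNat]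
  have hsum (M : ℕ) : ∑ k ∈ Icc 1 n, fejerSum M (chebNode n k) y =
      ∑ r ∈ range M, ∑ k ∈ Icc 1 n, darboux r (chebNode n k) y := sum_comm
  simp only [vpMajorant]
  rw [← mul_sum, sum_add_distrib, hsum, hsum, show 3 * n + n = 2 * n + 2 * n by omega,
    show 3 * n - n = 2 * n by omega, sum_range_add, hlow]
  calc 1 / (2 * n) * (2 * n * (n / π) + ∑ i ∈ range (2 * n), ∑ k ∈ Icc 1 n,
          darboux (2 * n + i) (chebNode n k) y + 2 * n * (n / π))
      ≤ 1 / (2 * n) * (2 * n * (n / π) + 2 * n * (3 * n / π) + 2 * n * (n / π)) := by gcongr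
    _ = 5 * n / π := by field_simp; ring

end FejerKernel

section Norms

/-- The normalised `ℓ^p` norm `((π/n) ∑ |a_k|^p)^{1/p}` of coefficients `a_1, …, a_n`. -/
noncomputable def nodalNorm (n : ℕ) (p : ℝ) (a : ℕ → ℝ) : ℝ :=
  (π / n * ∑ k ∈ Icc 1 n, |a k| ^ p) ^ (1 / p)

lemma nodalNorm_nonneg (n : ℕ) (p : ℝ) (a : ℕ → ℝ) : 0 ≤ nodalNorm n p a := by
  unfold nodalNorm
  positivity

lemma sum_mul_le_nodalNorm_mul_nodalNorm (n : ℕ) {p q : ℝ} (hpq : p.HolderConjugate q)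
    (a b : ℕ → ℝ) :
    π / n * ∑ k ∈ Icc 1 n, a k * b k ≤ nodalNorm n p a * nodalNorm n q b := by
  have hexp : 1 / p + 1 / q = 1 := by simpa using hpq.inv_add_inv_eq_one
  calc π / n * ∑ k ∈ Icc 1 n, a k * b k
      ≤ π / n * ((∑ k ∈ Icc 1 n, |a k| ^ p) ^ (1 / p) * (∑ k ∈ Icc 1 n, |b k| ^ q) ^ (1 / q)) := by
        gcongr
        exact inner_le_Lp_mul_Lq _ a b hpq
    _ = (π / n) ^ (1 / p) * (π / n) ^ (1 / q) *
          ((∑ k ∈ Icc 1 n, |a k| ^ p) ^ (1 / p) * (∑ k ∈ Icc 1 n, |b k| ^ q) ^ (1 / q)) := by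
        rw [← rpow_add_of_nonneg (by positivity) (one_div_nonneg.2 hpq.nonneg)
          (one_div_nonneg.2 hpq.symm.nonneg), hexp, rpow_one]
    _ = nodalNorm n p a * nodalNorm n q b := by
        rw [nodalNorm, nodalNorm, mul_rpow (by positivity) (by positivity),
          mul_rpow (by positivity) (by positivity)]
        ring

lemma lpNorm_eq_integral_measureT (p : ℝ) (f : ℝ → ℝ) :
    lpNorm p f = (∫ x, |f x| ^ p ∂measureT) ^ (1 / p) := by
  simp only [_root_.lpNorm, chebW, integral_measureT, sqrt_inv, one_div]

lemma lpNorm_nonneg (p : ℝ) (f : ℝ → ℝ) : 0 ≤ lpNorm p f := by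
  rw [lpNorm_eq_integral_measureT]
  exact rpow_nonneg (integral_nonneg fun x ↦ by positivity) _

lemma lpNorm_rpow {p : ℝ} (hp : p ≠ 0) (f : ℝ → ℝ) :
    lpNorm p f ^ p = ∫ x, |f x| ^ p ∂measureT := by
  rw [lpNorm_eq_integral_measureT, one_div,
    rpow_inv_rpow (integral_nonneg fun x ↦ by positivity) hp]

lemma lpNorm_smul {p : ℝ} (hp : p ≠ 0) (c : ℝ) (f : ℝ → ℝ) :
    lpNorm p (c • f) = |c| * lpNorm p f := by
  rw [← rpow_left_inj (lpNorm_nonneg _ _) (mul_nonneg (abs_nonneg c) (lpNorm_nonneg _ _)) hp,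
    mul_rpow (abs_nonneg c) (lpNorm_nonneg _ _), lpNorm_rpow hp, lpNorm_rpow hp,
    ← integral_const_mul]
  simp only [Pi.smul_apply, smul_eq_mul, abs_mul, mul_rpow (abs_nonneg _) (abs_nonneg _)]

lemma integrable_abs_rpow {p : ℝ} (hp : 0 ≤ p) {f : ℝ → ℝ} (hf : Continuous f) :
    Integrable (fun x ↦ |f x| ^ p) measureT :=
  integrable_of_continuous (hf.abs.rpow_const fun _ ↦ .inr hp)

lemma integral_measureT_const (c : ℝ) : ∫ _, c ∂measureT = π * c := by
  rw [integral_measureT_eq_integral_cos, intervalIntegral.integral_const, sub_zero, smul_eq_mul]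

lemma abs_le_supNorm {f : ℝ → ℝ} (hf : Continuous f) {x : ℝ} (hx : x ∈ Set.Icc (-1 : ℝ) 1) :
    |f x| ≤ supNorm f := by
  have hbdd : BddAbove (Set.range fun x : Set.Icc (-1 : ℝ) 1 ↦ |f x|) :=
    isCompact_range (by fun_prop) |>.bddAbove
  exact le_ciSup hbdd ⟨x, hx⟩

lemma supNorm_le {f : ℝ → ℝ} {C : ℝ} (h : ∀ x, |f x| ≤ C) : supNorm f ≤ C :=
  have : Nonempty (Set.Icc (-1 : ℝ) 1) := ⟨⟨0, by simp⟩⟩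
  ciSup_le fun x ↦ h x

lemma supNorm_nonneg (f : ℝ → ℝ) : 0 ≤ supNorm f := Real.iSup_nonneg fun _ ↦ abs_nonneg _

lemma supNorm_smul (c : ℝ) (f : ℝ → ℝ) : supNorm (c • f) = |c| * supNorm f := by
  simp only [supNorm, Real.mul_iSup_of_nonneg (abs_nonneg c), Pi.smul_apply, smul_eq_mul, abs_mul]

lemma integral_abs_le_pi_mul_supNorm {f : ℝ → ℝ} (hf : Continuous f) :
    ∫ x, |f x| ∂measureT ≤ π * supNorm f := by
  rw [← integral_measureT_const, integral_measureT_eq_integral_cos,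
    integral_measureT_eq_integral_cos]
  exact intervalIntegral.integral_mono_on pi_pos.le
    (Continuous.intervalIntegrable (by fun_prop) _ _) intervalIntegrable_const
    fun θ _ ↦ abs_le_supNorm hf (cos_mem_Icc θ)

lemma abs_sub_le_mul_div_abs_add (t : ℝ) {ε : ℝ} (hε : 0 < ε) :
    |t| - ε ≤ t * (t / (|t| + ε)) := by
  rw [mul_div_assoc', le_div_iff₀ (by positivity), ← abs_mul_abs_self]
  nlinarith

lemma integral_abs_rpow_le_of_forall_integral_mul_le {p M : ℝ} (hp : 1 ≤ p) {f : ℝ → ℝ}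
    (hf : Continuous f) (h : ∀ g, Continuous g → (∀ x, |g x| ≤ |f x| ^ (p - 1)) →
      ∫ x, f x * g x ∂measureT ≤ M) :
    ∫ x, |f x| ^ p ∂measureT ≤ M := by
  set J := ∫ x, |f x| ^ (p - 1) ∂measureT
  have : 0 ≤ J := integral_nonneg fun x ↦ by positivity
  have hcont : Continuous fun x ↦ |f x| ^ (p - 1) :=
    hf.abs.rpow_const fun _ ↦ .inr (by linarith)
  have perturbed (ε : ℝ) (hε : 0 < ε) : ∫ x, |f x| ^ p ∂measureT - ε * J ≤ M := by
    have hden (x : ℝ) : 0 < |f x| + ε := by positivity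
    -- `g` is a continuous version of `sign f * |f|^{p-1}`, the extremal in Hölder's inequality.
    let g : ℝ → ℝ := fun x ↦ f x / (|f x| + ε) * |f x| ^ (p - 1)
    have hg : Continuous g :=
      (hf.div (by fun_prop) fun x ↦ (hden x).ne').mul hcont
    have hg_le (x : ℝ) : |g x| ≤ |f x| ^ (p - 1) := by
      rw [abs_mul, abs_div, abs_of_pos (hden x), abs_of_nonneg (rpow_nonneg (abs_nonneg (f x)) _)]
      refine mul_le_of_le_one_left (by positivity) ((div_le_one (hden x)).2 (by linarith))
    have hfg (x : ℝ) : |f x| ^ p - ε * |f x| ^ (p - 1) ≤ f x * g x := by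
      have hpow : |f x| ^ p = |f x| ^ (p - 1) * |f x| := by
        rw [← rpow_add_one' (abs_nonneg _) (by linarith), sub_add_cancel]
      calc |f x| ^ p - ε * |f x| ^ (p - 1) = (|f x| - ε) * |f x| ^ (p - 1) := by rw [hpow]; ring
        _ ≤ f x * (f x / (|f x| + ε)) * |f x| ^ (p - 1) := by
          gcongr
          exact abs_sub_le_mul_div_abs_add _ hε
        _ = f x * g x := by ring
    have hfp := integrable_abs_rpow (p := p) (by linarith) hf
    have hfp' := (integrable_of_continuous hcont).const_mul ε
    calc ∫ x, |f x| ^ p ∂measureT - ε * J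
        = ∫ x, |f x| ^ p - ε * |f x| ^ (p - 1) ∂measureT := by
          rw [integral_sub hfp hfp', integral_const_mul]
      _ ≤ ∫ x, f x * g x ∂measureT :=
          integral_mono (hfp.sub hfp') (integrable_of_continuous (hf.mul hg)) hfg
      _ ≤ M := h g hg hg_le
  refine le_of_forall_pos_le_add fun δ hδ ↦ ?_
  have hsmall : δ / (J + 1) * J ≤ δ := by
    rw [div_mul_eq_mul_div, div_le_iff₀ (by positivity)]
    nlinarith
  linarith [perturbed (δ / (J + 1)) (by positivity)]

lemma lpNorm_le_of_forall_integral_mul_le {p q K : ℝ} (hpq : p.HolderConjugate q) {f : ℝ → ℝ}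
    (hf : Continuous f) (hK : 0 ≤ K)
    (h : ∀ g, Continuous g → ∫ x, f x * g x ∂measureT ≤ K * lpNorm q g) :
    lpNorm p f ≤ K := by
  set I := ∫ x, |f x| ^ p ∂measureT with hI
  have hle : I ≤ K * I ^ (1 / q) := by
    refine integral_abs_rpow_le_of_forall_integral_mul_le hpq.lt.le hf fun g hg hgf ↦
      (h g hg).trans ?_
    have hgq : ∫ x, |g x| ^ q ∂measureT ≤ I :=
      integral_mono (integrable_abs_rpow hpq.symm.nonneg hg)
        (integrable_abs_rpow hpq.nonneg hf) fun x ↦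
      calc |g x| ^ q ≤ (|f x| ^ (p - 1)) ^ q :=
            rpow_le_rpow (abs_nonneg _) (hgf x) hpq.symm.nonneg
        _ = |f x| ^ p := by rw [← rpow_mul (abs_nonneg _), hpq.sub_one_mul_conj]
    rw [lpNorm_eq_integral_measureT]
    have : 0 ≤ 1 / q := hpq.symm.one_div_nonneg
    gcongr
  rw [lpNorm_eq_integral_measureT, ← hI]
  have hI_nonneg : 0 ≤ I := integral_nonneg fun x ↦ by positivity
  rcases hI_nonneg.eq_or_lt with hI0 | hIpos
  · rwa [← hI0, zero_rpow hpq.one_div_ne_zero]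
  · have hexp : 1 / p = 1 - 1 / q := by
      rw [one_div, one_div, hpq.symm.one_sub_inv]
    rw [hexp, rpow_sub hIpos, rpow_one, div_le_iff₀ (by positivity)]
    exact hle

lemma lpNorm_one_le_of_forall_integral_mul_le {K : ℝ} {f : ℝ → ℝ} (hf : Continuous f)
    (hK : 0 ≤ K) (h : ∀ g, Continuous g → ∫ x, f x * g x ∂measureT ≤ K * supNorm g) :
    lpNorm 1 f ≤ K := by
  rw [lpNorm_eq_integral_measureT, div_one, rpow_one]
  refine integral_abs_rpow_le_of_forall_integral_mul_le le_rfl hf fun g hg hgf ↦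
    (h g hg).trans (mul_le_of_le_one_right hK (supNorm_le fun x ↦ ?_))
  simpa using hgf x

end Norms

section Marcinkiewicz

/-- The span of `p_0, …, p_{N-1}`: polynomials of degree less than `N`, extended to `ℝ` by their
values at the endpoints of `[-1,1]`. -/
noncomputable def chebSpan (N : ℕ) : Submodule ℝ (ℝ → ℝ) :=
  Submodule.span ℝ (chebP '' Set.Iio N)

lemma chebP_mem_chebSpan {s N : ℕ} (hs : s < N) : chebP s ∈ chebSpan N :=
  Submodule.subset_span (Set.mem_image_of_mem chebP hs)

lemma chebSpan_mono {M N : ℕ} (h : M ≤ N) : chebSpan M ≤ chebSpan N :=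
  Submodule.span_mono (Set.image_mono (Set.Iio_subset_Iio h))

lemma continuous_of_mem_chebSpan {N : ℕ} {f : ℝ → ℝ} (hf : f ∈ chebSpan N) : Continuous f := by
  induction hf using Submodule.span_induction with
  | mem f hf =>
    obtain ⟨s, -, rfl⟩ := hf
    exact continuous_chebP s
  | zero => exact continuous_const
  | add f g _ _ hf hg => exact hf.add hg
  | smul c f _ hf => exact hf.const_smul c

lemma integral_vpK_mul_of_mem_chebSpan {n m : ℕ} {f : ℝ → ℝ} (hm : 0 < m) (hmn : m ≤ n)
    (hf : f ∈ chebSpan (n - m + 1)) (x : ℝ) : ∫ y, vpK n m x y * f y ∂measureT = f x := by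
  induction hf using Submodule.span_induction with
  | mem f hf =>
    obtain ⟨s, hs, rfl⟩ := hf
    exact integral_vpK_mul_chebP hm hmn (Nat.lt_succ_iff.1 hs) x
  | zero => simp
  | add f g hf hg ihf ihg =>
    have := continuous_of_mem_chebSpan hf
    have := continuous_of_mem_chebSpan hg
    simp only [Pi.add_apply, mul_add]
    rw [integral_add (integrable_of_continuous (by fun_prop))
      (integrable_of_continuous (by fun_prop)), ihf, ihg]
  | smul c f _ ih =>
    simp only [Pi.smul_apply, smul_eq_mul, mul_left_comm _ c, integral_const_mul, ih]

lemma darboux_mem_chebSpan {r N : ℕ} (hr : r < N) (x : ℝ) : darboux r x ∈ chebSpan N := by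
  have hexpand : darboux r x = ∑ s ∈ range (r + 1), chebP s x • chebP s := by
    ext y
    simp [darboux]
  rw [hexpand]
  exact Submodule.sum_mem _ fun s hs ↦
    Submodule.smul_mem _ _ (chebP_mem_chebSpan (by grind))

lemma vpK_mem_chebSpan (n m : ℕ) (x : ℝ) : vpK n m x ∈ chebSpan (n + m) := by
  have hexpand : vpK n m x = (1 / (2 * m) : ℝ) • ∑ r ∈ Ico (n - m) (n + m), darboux r x := by
    ext y
    simp [vpK_eq_sum_Ico]
  rw [hexpand]
  exact Submodule.smul_mem _ _ (Submodule.sum_mem _ fun r hr ↦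
    darboux_mem_chebSpan (mem_Ico.1 hr).2 x)

lemma abs_le_integral_vpMajorant {n : ℕ} (hn : n ≠ 0) {f : ℝ → ℝ} (hf : f ∈ chebSpan (2 * n))
    (x : ℝ) : |f x| ≤ ∫ y, |f y| * vpMajorant (3 * n) n x y ∂measureT := by
  have hcont := continuous_of_mem_chebSpan hf
  have hf' : f ∈ chebSpan (3 * n - n + 1) := chebSpan_mono (by omega) hf
  calc |f x| = |∫ y, vpK (3 * n) n x y * f y ∂measureT| := by
        rw [integral_vpK_mul_of_mem_chebSpan (by omega) (by omega) hf']
    _ ≤ ∫ y, |vpK (3 * n) n x y * f y| ∂measureT := abs_integral_le_integral_abs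
    _ ≤ ∫ y, |f y| * vpMajorant (3 * n) n x y ∂measureT := by
        refine integral_mono (integrable_of_continuous (by fun_prop))
          (integrable_of_continuous (by fun_prop)) fun y ↦ ?_
        simp only [abs_mul, mul_comm |vpK _ _ _ _|]
        gcongr
        exact abs_vpK_le_vpMajorant (by omega) x y

theorem nodalNorm_chebNode_le {n : ℕ} (hn : n ≠ 0) {p : ℝ} (hp : 1 ≤ p) {f : ℝ → ℝ}
    (hf : f ∈ chebSpan (2 * n)) :
    nodalNorm n p (fun k ↦ f (chebNode n k)) ≤ 5 * lpNorm p f := by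
  have hcont := continuous_of_mem_chebSpan hf
  have hfp := hcont.abs.rpow_const (p := p) fun _ ↦ .inr (by linarith)
  have hsum : ∑ k ∈ Icc 1 n, |f (chebNode n k)| ^ p ≤
      3 ^ (p - 1) * (5 * n / π) * ∫ y, |f y| ^ p ∂measureT :=
    sum_abs_rpow_le_of_abs_le_integral hp (by norm_num)
      (fun k ↦ vpMajorant_nonneg (3 * n) n (chebNode n k))
      (fun k ↦ integrable_of_continuous (by fun_prop))
      (fun k ↦ integrable_of_continuous (by fun_prop))
      (fun k ↦ integrable_of_continuous (by fun_prop))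
      (integrable_of_continuous hfp)
      (fun k _ ↦ abs_le_integral_vpMajorant hn hf _)
      (fun k ↦ by
        rw [integral_vpMajorant (by omega) (by omega)]
        push_cast
        rw [mul_div_cancel_right₀ _ (by positivity)])
      (sum_vpMajorant_chebNode_le hn)
  have hconst : (3 : ℝ) ^ (p - 1) * 5 ≤ 5 ^ p := by
    calc (3 : ℝ) ^ (p - 1) * 5 ≤ 5 ^ (p - 1) * 5 := by
          gcongr
          norm_num
      _ = 5 ^ p := by rw [rpow_sub_one (by norm_num)]; field_simp
  have hnonneg : 0 ≤ ∫ y, |f y| ^ p ∂measureT := integral_nonneg fun y ↦ by positivity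
  have hle : π / n * ∑ k ∈ Icc 1 n, |f (chebNode n k)| ^ p ≤ 5 ^ p * ∫ y, |f y| ^ p ∂measureT :=
    calc π / n * ∑ k ∈ Icc 1 n, |f (chebNode n k)| ^ p
        ≤ π / n * (3 ^ (p - 1) * (5 * n / π) * ∫ y, |f y| ^ p ∂measureT) := by gcongr
      _ = 3 ^ (p - 1) * 5 * ∫ y, |f y| ^ p ∂measureT := by field_simp
      _ ≤ 5 ^ p * ∫ y, |f y| ^ p ∂measureT := by gcongr
  calc nodalNorm n p (fun k ↦ f (chebNode n k))
      ≤ (5 ^ p * ∫ y, |f y| ^ p ∂measureT) ^ (1 / p) := by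
        unfold nodalNorm
        gcongr
    _ = 5 * lpNorm p f := by
        rw [mul_rpow (by positivity) hnonneg, ← rpow_mul (by norm_num),
          mul_one_div_cancel (by linarith), rpow_one, lpNorm_eq_integral_measureT]

end Marcinkiewicz

section Operator

lemma vpOp_eq_integral_measureT (n m : ℕ) (f : ℝ → ℝ) (x : ℝ) :
    vpOp n m f x = ∫ y, vpK n m x y * f y ∂measureT := by
  simp only [vpOp, chebW, integral_measureT, sqrt_inv, one_div]

lemma vpOp_smul (n m : ℕ) (c : ℝ) (f : ℝ → ℝ) : vpOp n m (c • f) = c • vpOp n m f := by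
  ext x
  simp only [vpOp_eq_integral_measureT, Pi.smul_apply, smul_eq_mul, mul_left_comm _ c,
    integral_const_mul]

lemma vpOp_mem_chebSpan (n m : ℕ) {f : ℝ → ℝ} (hf : Continuous f) :
    vpOp n m f ∈ chebSpan (n + m) := by
  have hexpand : vpOp n m f = (1 / (2 * m) : ℝ) • ∑ r ∈ Ico (n - m) (n + m),
      ∑ s ∈ range (r + 1), (∫ y, chebP s y * f y ∂measureT) • chebP s := by
    ext x
    simp only [vpOp_eq_integral_measureT, integral_vpK_mul n m x hf, Pi.smul_apply,
      Finset.sum_apply, smul_eq_mul]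
  rw [hexpand]
  exact Submodule.smul_mem _ _ (Submodule.sum_mem _ fun r hr ↦ Submodule.sum_mem _ fun s hs ↦
    Submodule.smul_mem _ _ (chebP_mem_chebSpan (by grind)))

lemma exists_abs_vpK_le (n m : ℕ) : ∃ B, ∀ x y, |vpK n m x y| ≤ B := by
  have hdarboux (r : ℕ) (x y : ℝ) : |darboux r x y| ≤ (r + 1) * (√(2 / π) * √(2 / π)) := by
    refine (abs_sum_le_sum_abs _ _).trans
      ((sum_le_card_nsmul _ _ (√(2 / π) * √(2 / π)) fun s _ ↦ ?_).trans_eq ?_)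
    · rw [abs_mul]
      gcongr <;> exact abs_chebP_le _ _
    · simp
  refine ⟨1 / (2 * m) * ∑ r ∈ Ico (n - m) (n + m), (r + 1) * (√(2 / π) * √(2 / π)),
    fun x y ↦ ?_⟩
  rw [vpK_eq_sum_Ico, abs_mul, abs_of_nonneg (by positivity)]
  gcongr
  exact (abs_sum_le_sum_abs _ _).trans (sum_le_sum fun r _ ↦ hdarboux r x y)

variable {n m : ℕ} {B : ℝ}

lemma abs_vpOp_le (hB : ∀ x y, |vpK n m x y| ≤ B) {f : ℝ → ℝ} (hf : Continuous f) (x : ℝ) :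
    |vpOp n m f x| ≤ B * ∫ y, |f y| ∂measureT := by
  rw [vpOp_eq_integral_measureT, ← integral_const_mul]
  refine abs_integral_le_integral_abs.trans (integral_mono (integrable_of_continuous (by fun_prop))
    (integrable_of_continuous (by fun_prop)) fun y ↦ ?_)
  simp only [abs_mul]
  gcongr
  exact hB x y

lemma lpNorm_vpOp_le (hB : ∀ x y, |vpK n m x y| ≤ B) {q : ℝ} (hq : 1 ≤ q)
    {f : ℝ → ℝ} (hf : Continuous f) :
    lpNorm q (vpOp n m f) ≤ π * B * lpNorm q f := by
  have hB₀ : 0 ≤ B := (abs_nonneg _).trans (hB 0 0)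
  have hI : 0 ≤ ∫ y, |f y| ∂measureT := integral_nonneg fun y ↦ abs_nonneg _
  have jensen : (∫ y, |f y| ∂measureT) ^ q ≤ π ^ (q - 1) * ∫ y, |f y| ^ q ∂measureT := by
    simpa only [mul_one, integral_measureT_const] using integral_mul_rpow_le (w := fun _ ↦ 1) hq
      (fun y ↦ abs_nonneg (f y)) (fun _ ↦ zero_le_one) (integrable_of_continuous (by fun_prop))
      (integrable_of_continuous (by fun_prop))
      (by simpa only [mul_one] using integrable_abs_rpow (by linarith) hf)
  have hcont := continuous_of_mem_chebSpan (vpOp_mem_chebSpan n m hf)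
  rw [← rpow_le_rpow_iff (lpNorm_nonneg _ _) (by have := lpNorm_nonneg q f; positivity)
    (zero_lt_one.trans_le hq), mul_rpow (by positivity) (lpNorm_nonneg _ _),
    lpNorm_rpow (by linarith), lpNorm_rpow (by linarith)]
  calc ∫ x, |vpOp n m f x| ^ q ∂measureT
      ≤ ∫ _, (B * ∫ y, |f y| ∂measureT) ^ q ∂measureT :=
        integral_mono (integrable_abs_rpow (by linarith) hcont)
          (integrable_of_continuous continuous_const) fun x ↦
          rpow_le_rpow (abs_nonneg _) (abs_vpOp_le hB hf x) (by linarith)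
    _ = π * B ^ q * (∫ y, |f y| ∂measureT) ^ q := by
        rw [integral_measureT_const, mul_rpow hB₀ hI, mul_assoc]
    _ ≤ π * B ^ q * (π ^ (q - 1) * ∫ y, |f y| ^ q ∂measureT) := by gcongr
    _ = (π * B) ^ q * ∫ y, |f y| ^ q ∂measureT := by
        rw [mul_rpow pi_pos.le hB₀, rpow_sub_one pi_ne_zero]
        field_simp

lemma supNorm_vpOp_le (hB : ∀ x y, |vpK n m x y| ≤ B) {f : ℝ → ℝ} (hf : Continuous f) :
    supNorm (vpOp n m f) ≤ π * B * supNorm f :=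
  have hB₀ : 0 ≤ B := (abs_nonneg _).trans (hB 0 0)
  supNorm_le fun x ↦
    calc |vpOp n m f x| ≤ B * ∫ y, |f y| ∂measureT := abs_vpOp_le hB hf x
      _ ≤ B * (π * supNorm f) := by
        gcongr
        exact integral_abs_le_pi_mul_supNorm hf
      _ = π * B * supNorm f := by ring

lemma lpNorm_vpOp_le_vpOpNormLp_mul (n m : ℕ) {q : ℝ} (hq : 1 ≤ q) {f : ℝ → ℝ}
    (hf : Continuous f) : lpNorm q (vpOp n m f) ≤ vpOpNormLp n m q * lpNorm q f := by
  obtain ⟨B, hB⟩ := exists_abs_vpK_le n m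
  exact le_sSup_mul (P := Continuous) (fun c _ hf ↦ hf.const_smul c)
    (lpNorm_smul (by linarith)) (lpNorm_nonneg q) (vpOp_smul n m)
    ⟨π * B, fun _ ↦ lpNorm_vpOp_le hB hq⟩ hf

lemma supNorm_vpOp_le_vpOpNormSup_mul (n m : ℕ) {f : ℝ → ℝ} (hf : Continuous f) :
    supNorm (vpOp n m f) ≤ vpOpNormSup n m * supNorm f := by
  obtain ⟨B, hB⟩ := exists_abs_vpK_le n m
  exact le_sSup_mul (P := Continuous) (fun c _ hf ↦ hf.const_smul c) supNorm_smul supNorm_nonneg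
    (vpOp_smul n m) ⟨π * B, fun _ ↦ supNorm_vpOp_le hB⟩ hf

lemma vpOpNormLp_nonneg (n m : ℕ) (q : ℝ) : 0 ≤ vpOpNormLp n m q :=
  Real.sSup_nonneg (by rintro _ ⟨f, -, -, rfl⟩; exact lpNorm_nonneg _ _)

lemma vpOpNormSup_nonneg (n m : ℕ) : 0 ≤ vpOpNormSup n m :=
  Real.sSup_nonneg (by rintro _ ⟨f, -, -, rfl⟩; exact supNorm_nonneg _)

end Operator

section ScalingBasis

/-- The combination `∑ a_k Φ_{n,k}^m` of scaling functions. -/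
noncomputable def scalExpansion (n m : ℕ) (a : ℕ → ℝ) : ℝ → ℝ :=
  fun x ↦ ∑ k ∈ Icc 1 n, a k * scal n m k x

variable {n m : ℕ} {p : ℝ}

lemma scalExpansion_chebNode (hm : 0 < m) (hmn : m ≤ n) (a : ℕ → ℝ) {h : ℕ} (hh : h ∈ Icc 1 n) :
    scalExpansion n m a (chebNode n h) = a h := by
  have hn : n ≠ 0 := by omega
  rw [scalExpansion, sum_eq_single_of_mem h hh fun k hk hkh ↦ ?_]
  · rw [scal, vpK_chebNode hm hmn hh hh, if_pos rfl]
    field_simp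
  · rw [scal, vpK_chebNode hm hmn hk hh, if_neg hkh, mul_zero, mul_zero]

lemma scalExpansion_mem_chebSpan (n m : ℕ) (a : ℕ → ℝ) :
    scalExpansion n m a ∈ chebSpan (n + m) := by
  have hexpand : scalExpansion n m a =
      ∑ k ∈ Icc 1 n, (a k * (π / n)) • vpK n m (chebNode n k) := by
    ext x
    simp [scalExpansion, scal, mul_assoc]
  rw [hexpand]
  exact Submodule.sum_mem _ fun k _ ↦ Submodule.smul_mem _ _ (vpK_mem_chebSpan n m _)

lemma integral_scalExpansion_mul (n m : ℕ) (a : ℕ → ℝ) {g : ℝ → ℝ} (hg : Continuous g) :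
    ∫ x, scalExpansion n m a x * g x ∂measureT =
      π / n * ∑ k ∈ Icc 1 n, a k * vpOp n m g (chebNode n k) := by
  simp only [scalExpansion, scal, sum_mul, mul_sum, vpOp_eq_integral_measureT]
  rw [integral_finsetSum _ fun k _ ↦ integrable_of_continuous (by fun_prop)]
  refine sum_congr rfl fun k _ ↦ ?_
  rw [← integral_const_mul, ← integral_const_mul]
  refine integral_congr_ae (.of_forall fun x ↦ ?_)
  ring

theorem nodalNorm_le_lpNorm_scalExpansion (hm : 0 < m) (hmn : m ≤ n) (hp : 1 ≤ p) (a : ℕ → ℝ) :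
    nodalNorm n p a ≤ 5 * lpNorm p (scalExpansion n m a) := by
  have hnodes : nodalNorm n p (fun k ↦ scalExpansion n m a (chebNode n k)) = nodalNorm n p a := by
    refine congrArg (fun s ↦ (π / n * s) ^ (1 / p)) (sum_congr rfl fun k hk ↦ ?_)
    simp only [scalExpansion_chebNode hm hmn a hk]
  rw [← hnodes]
  exact nodalNorm_chebNode_le (by omega) hp
    (chebSpan_mono (by omega) (scalExpansion_mem_chebSpan n m a))

theorem lpNorm_scalExpansion_le (hn : n ≠ 0) (hmn : m ≤ n) {q : ℝ} (hpq : p.HolderConjugate q)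
    (a : ℕ → ℝ) :
    lpNorm p (scalExpansion n m a) ≤ vpOpNormLp n m q * 5 * nodalNorm n p a := by
  have hc := vpOpNormLp_nonneg n m q
  have ha := nodalNorm_nonneg n p a
  refine lpNorm_le_of_forall_integral_mul_le hpq
    (continuous_of_mem_chebSpan (scalExpansion_mem_chebSpan n m a)) (by positivity) fun g hg ↦ ?_
  calc ∫ x, scalExpansion n m a x * g x ∂measureT
      = π / n * ∑ k ∈ Icc 1 n, a k * vpOp n m g (chebNode n k) :=
        integral_scalExpansion_mul n m a hg
    _ ≤ nodalNorm n p a * nodalNorm n q (fun k ↦ vpOp n m g (chebNode n k)) :=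
        sum_mul_le_nodalNorm_mul_nodalNorm n hpq _ _
    _ ≤ nodalNorm n p a * (5 * lpNorm q (vpOp n m g)) := by
        gcongr
        exact nodalNorm_chebNode_le hn hpq.symm.lt.le
          (chebSpan_mono (by omega) (vpOp_mem_chebSpan n m hg))
    _ ≤ nodalNorm n p a * (5 * (vpOpNormLp n m q * lpNorm q g)) := by
        gcongr
        exact lpNorm_vpOp_le_vpOpNormLp_mul n m hpq.symm.lt.le hg
    _ = vpOpNormLp n m q * 5 * nodalNorm n p a * lpNorm q g := by ring

theorem lpNorm_one_scalExpansion_le (n m : ℕ) (a : ℕ → ℝ) :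
    lpNorm 1 (scalExpansion n m a) ≤ vpOpNormSup n m * nodalNorm n 1 a := by
  have hc := vpOpNormSup_nonneg n m
  have ha := nodalNorm_nonneg n 1 a
  refine lpNorm_one_le_of_forall_integral_mul_le
    (continuous_of_mem_chebSpan (scalExpansion_mem_chebSpan n m a)) (by positivity) fun g hg ↦ ?_
  have hcont := continuous_of_mem_chebSpan (vpOp_mem_chebSpan n m hg)
  calc ∫ x, scalExpansion n m a x * g x ∂measureT
      = π / n * ∑ k ∈ Icc 1 n, a k * vpOp n m g (chebNode n k) :=
        integral_scalExpansion_mul n m a hg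
    _ ≤ π / n * ∑ k ∈ Icc 1 n, |a k| * supNorm (vpOp n m g) := by
        refine mul_le_mul_of_nonneg_left (sum_le_sum fun k _ ↦ ?_) (by positivity)
        refine (le_abs_self _).trans ?_
        rw [abs_mul]
        gcongr
        exact abs_le_supNorm hcont (chebNode_mem_Icc n k)
    _ = nodalNorm n 1 a * supNorm (vpOp n m g) := by
        simp only [nodalNorm, rpow_one, div_one, ← sum_mul, mul_assoc]
    _ ≤ nodalNorm n 1 a * (vpOpNormSup n m * supNorm g) := by
        gcongr
        exact supNorm_vpOp_le_vpOpNormSup_mul n m hg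
    _ = vpOpNormSup n m * nodalNorm n 1 a * supNorm g := by ring

end ScalingBasis

end VallePoussin

open VallePoussin in
theorem scal_Lp_riesz_bounds_general (n m : ℕ) (hm : 0 < m) (hmn : m ≤ n)
    (p : ℝ) (hp : 1 ≤ p) (a : ℕ → ℝ) (C : ℝ) (hC : 5 ≤ C) :
    (1 / C) * ((Real.pi / (n : ℝ) * ∑ k ∈ Finset.Icc 1 n, |a k| ^ p) ^ (1 / p)) ≤
      lpNorm p (fun x => ∑ k ∈ Finset.Icc 1 n, a k * scal n m k x) ∧
    lpNorm p (fun x => ∑ k ∈ Finset.Icc 1 n, a k * scal n m k x) ≤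
      (if p = 1 then vpOpNormSup n m else vpOpNormLp n m (p / (p - 1))) * C *
        ((Real.pi / (n : ℝ) * ∑ k ∈ Finset.Icc 1 n, |a k| ^ p) ^ (1 / p)) := by
  change 1 / C * nodalNorm n p a ≤ lpNorm p (scalExpansion n m a) ∧
    lpNorm p (scalExpansion n m a) ≤ _ * C * nodalNorm n p a
  have hnorm := lpNorm_nonneg p (scalExpansion n m a)
  have ha := nodalNorm_nonneg n p a
  constructor
  · rw [one_div, inv_mul_le_iff₀ (by linarith)]
    exact (nodalNorm_le_lpNorm_scalExpansion hm hmn hp a).trans (by gcongr)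
  split_ifs with hp1
  · subst hp1
    have hc := vpOpNormSup_nonneg n m
    exact (lpNorm_one_scalExpansion_le n m a).trans
      (by gcongr; exact le_mul_of_one_le_right hc (by linarith))
  · have hpq : p.HolderConjugate (p / (p - 1)) :=
      HolderConjugate.conjExponent (hp.lt_of_ne' hp1)
    have hc := vpOpNormLp_nonneg n m (p / (p - 1))
    exact (lpNorm_scalExpansion_le (by omega) hmn hpq a).trans (by gcongr)

theorem scal_Lp_riesz_bounds (n m : ℕ) (hm : 0 < m) (hmn : m < n)
    (p : ℝ) (hp : 1 ≤ p) (a : ℕ → ℝ) :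
    (1 / (1 + 4 * Real.pi)) *
        ((Real.pi / (n : ℝ) * ∑ k ∈ Finset.Icc 1 n, |a k| ^ p) ^ (1 / p)) ≤
      lpNorm p (fun x => ∑ k ∈ Finset.Icc 1 n, a k * scal n m k x) ∧
    lpNorm p (fun x => ∑ k ∈ Finset.Icc 1 n, a k * scal n m k x) ≤
      (if p = 1 then vpOpNormSup n m else vpOpNormLp n m (p / (p - 1))) *
        (1 + 4 * Real.pi) *
        ((Real.pi / (n : ℝ) * ∑ k ∈ Finset.Icc 1 n, |a k| ^ p) ^ (1 / p)) := by
  exact scal_Lp_riesz_bounds_general n m hm hmn.le p hp a (1 + 4 * π) (by linarith [pi_gt_three])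
end
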